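/- arXiv:1706.09675 — 2 statements merged into one kernel-verified Lean document; each statement's English description precedes it below -/
import Mathlib

section
/- Let H be a simple graph on 2n vertices with no isolated vertices that has a minimal vertex cover consisting of n vertices. Then H is a Cohen–Macaulay graph (i.e. R/I(H) is Cohen–Macaulay, where R is the polynomial ring on the vertices of H over a field k) if and only if H is a twin-free very well-covered graph. -/
open MvPolynomial

/-- The depth of the `R`-module `M` with respect to the ideal `J`: the supremum of
lengths of `M`-regular sequences consisting of elements of `J`. -/
noncomputable def idealDepth {R : Type*} [CommRing R] (J : Ideal R)
    (M : Type*) [AddCommGroup M] [Module R M] : ℕ :=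
  sSup {d : ℕ | ∃ rs : List R, rs.length = d ∧ (∀ r ∈ rs, r ∈ J) ∧
    RingTheory.Sequence.IsRegular M rs}

/-- The irrelevant maximal homogeneous ideal `(x₁, …, xₙ)` of the polynomial ring. -/
noncomputable def mxIdeal (k : Type*) [Field k] (n : ℕ) : Ideal (MvPolynomial (Fin n) k) :=
  Ideal.span (Set.range MvPolynomial.X)

/-- `depth R/I`, the depth of the quotient module with respect to the maximal
homogeneous ideal. -/
noncomputable def pdepth {k : Type*} [Field k] {n : ℕ}
    (I : Ideal (MvPolynomial (Fin n) k)) : ℕ :=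
  idealDepth (mxIdeal k n) (MvPolynomial (Fin n) k ⧸ I)

/-- `p` is homogeneous of degree `d ∈ ℤ` (where `0` is homogeneous of any degree). -/
def HomogOfDeg {k : Type*} [Field k] {n : ℕ} (p : MvPolynomial (Fin n) k) (d : ℤ) : Prop :=
  p = 0 ∨ ∃ m : ℕ, (m : ℤ) = d ∧ p.IsHomogeneous m

/-- A finite graded free resolution of `R/I`: free modules `Fᵢ = ⊕_j R(-D i j)` (of rank
`b i`, zero for `i > len`), differentials given by matrices `A i : Fᵢ₊₁ → Fᵢ` whose entries
are homogeneous of the appropriate degrees, and an augmentation `F₀ → R/I` given by the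
homogeneous column `v`, the whole complex being exact. -/
structure GradedFreeRes {k : Type*} [Field k] {n : ℕ}
    (I : Ideal (MvPolynomial (Fin n) k)) where
  len : ℕ
  b : ℕ → ℕ
  hb : ∀ i : ℕ, len < i → b i = 0
  D : (i : ℕ) → Fin (b i) → ℤ
  A : (i : ℕ) → Matrix (Fin (b i)) (Fin (b (i+1))) (MvPolynomial (Fin n) k)
  v : Fin (b 0) → MvPolynomial (Fin n) k
  hv : ∀ r, HomogOfDeg (v r) (D 0 r)
  hA : ∀ (i : ℕ) r c, HomogOfDeg (A i r c) (D (i+1) c - D i r)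
  haug : Function.Surjective
    (fun w : Fin (b 0) → MvPolynomial (Fin n) k => Ideal.Quotient.mk I (∑ r, w r * v r))
  hex0 : Function.Exact ((A 0).mulVec)
    (fun w : Fin (b 0) → MvPolynomial (Fin n) k => Ideal.Quotient.mk I (∑ r, w r * v r))
  hex : ∀ i : ℕ, Function.Exact ((A (i+1)).mulVec) ((A i).mulVec)

/-- The Castelnuovo–Mumford regularity `reg R/I`: the least `r` such that some finite
graded free resolution of `R/I` has all its `i`-th twists `≤ r + i`; equivalently (via the
minimal free resolution) `reg R/I = max { j - i : β_{i,j}(R/I) ≠ 0 }`. -/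
noncomputable def regQuot {k : Type*} [Field k] {n : ℕ}
    (I : Ideal (MvPolynomial (Fin n) k)) : ℤ :=
  sInf {r : ℤ | ∃ F : GradedFreeRes I, ∀ (i : ℕ) (j : Fin (F.b i)), F.D i j - (i : ℤ) ≤ r}

/-- The regularity of a (nonzero) homogeneous ideal: `reg I = reg R/I + 1`. -/
noncomputable def regIdeal {k : Type*} [Field k] {n : ℕ}
    (I : Ideal (MvPolynomial (Fin n) k)) : ℤ :=
  regQuot I + 1

/-- An ideal is homogeneous if it is generated by homogeneous polynomials. -/
def IsHomogeneousIdeal {k : Type*} [Field k] {n : ℕ}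
    (I : Ideal (MvPolynomial (Fin n) k)) : Prop :=
  ∃ T : Set (MvPolynomial (Fin n) k), (∀ p ∈ T, ∃ d : ℕ, p.IsHomogeneous d) ∧ I = Ideal.span T

/-- A monomial ideal: an ideal generated by monomials. -/
def IsMonomialIdeal {k : Type*} [Field k] {n : ℕ}
    (I : Ideal (MvPolynomial (Fin n) k)) : Prop :=
  ∃ T : Set (Fin n →₀ ℕ), I = Ideal.span ((fun m => monomial m (1 : k)) '' T)


/-- The edge ideal of a simple graph. -/
noncomputable def edgeIdealG (k : Type*) [Field k] {m : ℕ} (G : SimpleGraph (Fin m)) :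
    Ideal (MvPolynomial (Fin m) k) :=
  Ideal.span {p | ∃ i j : Fin m, G.Adj i j ∧ p = MvPolynomial.X i * MvPolynomial.X j}

/-- `C` is a vertex cover of `G`. -/
def IsVertexCover {m : ℕ} (G : SimpleGraph (Fin m)) (C : Finset (Fin m)) : Prop :=
  ∀ v w : Fin m, G.Adj v w → v ∈ C ∨ w ∈ C

/-- `C` is a minimal vertex cover of `G`. -/
def IsMinimalVertexCover {m : ℕ} (G : SimpleGraph (Fin m)) (C : Finset (Fin m)) : Prop :=
  IsVertexCover G C ∧ ∀ C' ⊆ C, IsVertexCover G C' → C' = C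

/-!
Let `I = I(G)`. Depth is bounded by `dim R/P` for every associated prime `P` of `R/I`, and the
ideals generated by the minimal vertex covers are among these; if `R/I` is Cohen–Macaulay, all
minimal vertex covers therefore have the same size, namely half of the vertices. If moreover `v` and
`w` are twins, then `I = (I + (v, w)) ∩ (I + (N(v)))`, and a connectedness theorem bounds the depth
by `dim R/(I + (v, w) + (N(v))) + 1`; as every independent set avoiding `v`, `w` and `N(v)` can be
enlarged by both `v` and `w`, this is less than `dim R/I`.

Conversely, a very well-covered graph has a perfect matching `σ`, by Hall's theorem, and
`u ≤ w ↔ G.Adj u (σ w)` is a preorder, which is antisymmetric exactly when `G` is twin-free. In that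
case the `n` sums `X v + X (σ v)`, one for each matching edge, form a regular sequence on `R/I`.
-/

open RingTheory.Sequence
open scoped Pointwise

section QuotientByElement

variable {R : Type*} [CommRing R]

/-- The identification of `(R/K)/x(R/K)` with `R/(K + (x))`, which turns regular sequences on `R/K`
into statements about ideals. -/
noncomputable def quotSMulTopQuotientEquiv (K : Ideal R) (x : R) :
    QuotSMulTop x (R ⧸ K) ≃ₗ[R] R ⧸ (K ⊔ Ideal.span {x}) :=
  (Submodule.quotEquivOfEq _ _ (by
    rw [← Submodule.range_mkQ K, ← Submodule.map_top, ← Submodule.map_pointwise_smul,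
      ← Ideal.submodule_span_eq, ← Submodule.ideal_span_singleton_smul, smul_eq_mul,
      Ideal.mul_top, Ideal.submodule_span_eq])).trans
    (Submodule.quotientQuotientEquivQuotientSup K (Ideal.span {x}))

theorem isWeaklyRegular_quotient_cons_iff (K : Ideal R) (x : R) (rs : List R) :
    IsWeaklyRegular (R ⧸ K) (x :: rs) ↔
      IsSMulRegular (R ⧸ K) x ∧ IsWeaklyRegular (R ⧸ (K ⊔ Ideal.span {x})) rs := by
  rw [isWeaklyRegular_cons_iff, (quotSMulTopQuotientEquiv K x).isWeaklyRegular_congr]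

theorem isSMulRegular_quotient_iff {K : Ideal R} {x : R} :
    IsSMulRegular (R ⧸ K) x ↔ ∀ a, x * a ∈ K → a ∈ K :=
  isSMulRegular_quotient_iff_mem_of_smul_mem K x

theorem ringKrullDim_quotient_anti {I J : Ideal R} (h : I ≤ J) :
    ringKrullDim (R ⧸ J) ≤ ringKrullDim (R ⧸ I) :=
  ringKrullDim_le_of_surjective _ (Ideal.Quotient.factor_surjective h)

theorem ringKrullDim_quotient_sup_span_singleton_add_one_le {K : Ideal R} {x : R}
    (hx : IsSMulRegular (R ⧸ K) x) :
    ringKrullDim (R ⧸ (K ⊔ Ideal.span {x})) + 1 ≤ ringKrullDim (R ⧸ K) := by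
  refine ringKrullDim_succ_le_of_surjective
    (Ideal.Quotient.factor (le_sup_left : K ≤ K ⊔ Ideal.span {x}))
    (Ideal.Quotient.factor_surjective _) (r := Ideal.Quotient.mk K x) ?_ ?_
  · rw [mem_nonZeroDivisors_iff_right]
    intro z hz
    obtain ⟨a, rfl⟩ := Ideal.Quotient.mk_surjective z
    rw [← map_mul, Ideal.Quotient.eq_zero_iff_mem, mul_comm] at hz
    exact Ideal.Quotient.eq_zero_iff_mem.2 (isSMulRegular_quotient_iff.1 hx a hz)
  · rw [Ideal.Quotient.factor_mk, Ideal.Quotient.eq_zero_iff_mem]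
    exact Ideal.mem_sup_right (Ideal.mem_span_singleton_self x)

theorem isRegular_quotient_of_isWeaklyRegular {I J : Ideal R} (hIJ : I ≤ J) (hJ : J ≠ ⊤)
    {rs : List R} (hrs : ∀ r ∈ rs, r ∈ J) (h : IsWeaklyRegular (R ⧸ I) rs) :
    IsRegular (R ⧸ I) rs := by
  refine ⟨h, fun htop => hJ ?_⟩
  have hJtop : J • (⊤ : Submodule R (R ⧸ I)) = ⊤ :=
    top_le_iff.1 (htop.le.trans (Submodule.smul_mono_left (Ideal.span_le.2 hrs)))
  rw [Ideal.smul_top_eq_map, Submodule.restrictScalars_eq_top_iff] at hJtop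
  rw [← Ideal.comap_map_mk hIJ, ← Ideal.Quotient.algebraMap_eq, hJtop, Ideal.comap_top]

end QuotientByElement

section AssociatedPrimes

variable {S M : Type*} [CommRing S] [IsNoetherianRing S] [IsLocalRing S]
  [AddCommGroup M] [Module S M] [Module.Finite S M]

open IsLocalRing

-- By Nakayama, the elements of `M` killed by `P` do not all lie in `xM`.
theorem exists_mem_associatedPrimes_quotSMulTop {x : S} (hxm : x ∈ maximalIdeal S)
    (hx : IsSMulRegular M x) {P : Ideal S} (hP : P ∈ associatedPrimes S M) :
    ∃ Q ∈ associatedPrimes S (QuotSMulTop x M), P ⊔ Ideal.span {x} ≤ Q := by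
  let N : Submodule S M := Submodule.torsionBySet S M P
  have hN : ¬ N ≤ x • (⊤ : Submodule S M) := by
    intro hle
    have hN_le : N ≤ Ideal.span {x} • N := by
      intro y hy
      obtain ⟨z, -, rfl⟩ := Submodule.mem_smul_pointwise_iff_exists _ _ _ |>.1 (hle hy)
      rw [Submodule.ideal_span_singleton_smul]
      refine Submodule.smul_mem_pointwise_smul _ _ _ ?_
      rw [Submodule.mem_torsionBySet_iff] at hy ⊢
      intro a
      apply hx
      change x • (a : S) • z = x • 0
      rw [smul_comm, hy a, smul_zero]
    have hN_bot : N = ⊥ := Submodule.eq_bot_of_le_smul_of_le_jacobson_bot _ _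
      (IsNoetherian.noetherian N) hN_le
      ((Ideal.span_singleton_le_iff_mem _).2 (maximalIdeal_le_jacobson _ hxm))
    obtain ⟨hPprime, y, rfl⟩ := isAssociatedPrime_iff.1 hP
    have hy : y ∈ N := by
      rw [Submodule.mem_torsionBySet_iff]
      exact fun a => Submodule.mem_colon_singleton.1 a.2
    rw [hN_bot, Submodule.mem_bot] at hy
    exact hPprime.ne_top (by simp [hy])
  obtain ⟨y, hyN, hyx⟩ := SetLike.not_le_iff_exists.1 hN
  obtain ⟨Q, hQ, hle⟩ := exists_le_isAssociatedPrime_of_isNoetherianRing S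
    (Submodule.Quotient.mk y : QuotSMulTop x M) (by rwa [Ne, Submodule.Quotient.mk_eq_zero])
  refine ⟨Q, hQ, le_trans ?_ hle⟩
  rw [sup_le_iff, Ideal.span_singleton_le_iff_mem]
  constructor
  · intro a ha
    rw [Submodule.mem_colon_singleton, Submodule.mem_bot, ← Submodule.Quotient.mk_smul,
      (Submodule.mem_torsionBySet_iff _ _).1 hyN ⟨a, ha⟩, Submodule.Quotient.mk_zero]
  · rw [Submodule.mem_colon_singleton, Submodule.mem_bot, ← Submodule.Quotient.mk_smul,
      Submodule.Quotient.mk_eq_zero]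
    exact Submodule.smul_mem_pointwise_smul _ _ _ Submodule.mem_top

theorem length_le_ringKrullDim_quotient_of_isLocalRing {rs : List S}
    (hrs : ∀ r ∈ rs, r ∈ maximalIdeal S) (h : IsWeaklyRegular M rs) {P : Ideal S}
    (hP : P ∈ associatedPrimes S M) : (rs.length : WithBot ℕ∞) ≤ ringKrullDim (S ⧸ P) := by
  induction rs generalizing M P with
  | nil =>
    have : Nontrivial (S ⧸ P) := Ideal.Quotient.nontrivial_iff.2 hP.isPrime.ne_top
    simpa using ringKrullDim_nonneg_of_nontrivial
  | cons x rs ih =>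
    rw [List.forall_mem_cons] at hrs
    obtain ⟨hx, h⟩ := (isWeaklyRegular_cons_iff M x rs).1 h
    obtain ⟨Q, hQ, hle⟩ := exists_mem_associatedPrimes_quotSMulTop hrs.1 hx hP
    have hxP : x ∉ P := fun hxP =>
      (biUnion_associatedPrimes_eq_compl_regular S M).subset (Set.mem_biUnion hP hxP) hx
    have hxP' : IsSMulRegular (S ⧸ P) x :=
      isSMulRegular_quotient_iff.2 fun a ha => (hP.isPrime.mem_or_mem ha).resolve_left hxP
    calc ((x :: rs).length : WithBot ℕ∞) = rs.length + 1 := by simp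
      _ ≤ ringKrullDim (S ⧸ (P ⊔ Ideal.span {x})) + 1 := by
        gcongr
        exact (ih hrs.2 h hQ).trans (ringKrullDim_quotient_anti hle)
      _ ≤ ringKrullDim (S ⧸ P) := ringKrullDim_quotient_sup_span_singleton_add_one_le hxP'

end AssociatedPrimes

section Localization

variable {R : Type*} [CommRing R] (T : Submonoid R) (S : Type*) [CommRing S] [Algebra R S]
  [IsLocalization T S]

include T

theorem ringKrullDim_le_of_isLocalization : ringKrullDim S ≤ ringKrullDim R :=
  Order.krullDim_le_of_strictMono (PrimeSpectrum.comap (algebraMap R S))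
    (Monotone.strictMono_of_injective (fun _ _ h => Ideal.comap_mono h)
      (PrimeSpectrum.localization_comap_injective S T))

theorem ringKrullDim_quotient_map_le_of_isLocalization (K : Ideal R) :
    ringKrullDim (S ⧸ K.map (algebraMap R S)) ≤ ringKrullDim (R ⧸ K) :=
  ringKrullDim_le_of_isLocalization (Algebra.algebraMapSubmonoid (R ⧸ K) T) _

theorem isWeaklyRegular_quotient_map_of_isLocalization {K : Ideal R} {rs : List R}
    (h : IsWeaklyRegular (R ⧸ K) rs) :
    IsWeaklyRegular (S ⧸ K.map (algebraMap R S)) (rs.map (algebraMap R S)) := by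
  rw [← Ideal.localized'_eq_map S T K]
  exact h.of_isLocalizedModule S T (K.toLocalizedQuotient' S T (Algebra.linearMap R S))

omit T in
theorem forall_mem_map_algebraMap_maximalIdeal {m : Ideal R} [m.IsPrime] {rs : List R}
    (hrs : ∀ r ∈ rs, r ∈ m) :
    ∀ r ∈ rs.map (algebraMap R (Localization.AtPrime m)),
      r ∈ IsLocalRing.maximalIdeal (Localization.AtPrime m) :=
  List.forall_mem_map.2 fun r hr =>
    (IsLocalization.AtPrime.to_map_mem_maximal_iff _ m r).2 (hrs r hr)

end Localization

theorem length_le_ringKrullDim_quotient_of_mem_associatedPrimes {R M : Type*} [CommRing R]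
    [IsNoetherianRing R] [AddCommGroup M] [Module R M] [Module.Finite R M] {m P : Ideal R}
    [m.IsPrime] {rs : List R} (hrs : ∀ r ∈ rs, r ∈ m) (h : IsWeaklyRegular M rs)
    (hP : P ∈ associatedPrimes R M) (hPm : P ≤ m) :
    (rs.length : WithBot ℕ∞) ≤ ringKrullDim (R ⧸ P) := by
  let S := Localization.AtPrime m
  let f := LocalizedModule.mkLinearMap m.primeCompl M
  have hPS : P.map (algebraMap R S) ∈ associatedPrimes S (LocalizedModule.AtPrime m M) := by
    open Module.associatedPrimes in
    refine mem_associatedPrimes_of_comap_mem_associatedPrimes_of_isLocalizedModule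
      m.primeCompl f _ ?_
    rw [← Ideal.under_def, IsLocalization.under_map_of_isPrime_disjoint m.primeCompl S hP.isPrime
      (Set.disjoint_compl_left_iff_subset.2 hPm)]
    exact hP
  rw [← List.length_map (algebraMap R S)]
  exact (length_le_ringKrullDim_quotient_of_isLocalRing
    (forall_mem_map_algebraMap_maximalIdeal hrs)
    (h.of_isLocalizedModule S m.primeCompl f) hPS).trans
    (ringKrullDim_quotient_map_le_of_isLocalization m.primeCompl S P)

section Saturation

variable {R : Type*} [CommRing R]

/-- The saturation `K : x^∞`, the ideal of all elements that some power of `x` multiplies into `K`,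
encoded as the contraction of the extension of `K` to the localization away from `x`. -/
noncomputable def saturation (K : Ideal R) (x : R) : Ideal R :=
  (K.map (algebraMap R (Localization.Away x))).comap (algebraMap R (Localization.Away x))

theorem mem_saturation {K : Ideal R} {x a : R} : a ∈ saturation K x ↔ ∃ n, x ^ n * a ∈ K := by
  rw [saturation, Ideal.mem_comap,
    IsLocalization.algebraMap_mem_map_algebraMap_iff (Submonoid.powers x)]
  simp [Submonoid.mem_powers_iff]

theorem le_saturation (K : Ideal R) (x : R) : K ≤ saturation K x :=
  Ideal.le_comap_map

theorem saturation_inf (K₁ K₂ : Ideal R) (x : R) :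
    saturation (K₁ ⊓ K₂) x = saturation K₁ x ⊓ saturation K₂ x := by
  rw [saturation, IsLocalization.map_inf (Submonoid.powers x), Ideal.comap_inf]
  rfl

theorem isSMulRegular_quotient_saturation (K : Ideal R) (x : R) :
    IsSMulRegular (R ⧸ saturation K x) x := by
  refine isSMulRegular_quotient_iff.2 fun a ha => ?_
  obtain ⟨n, hn⟩ := mem_saturation.1 ha
  exact mem_saturation.2 ⟨n + 1, by rwa [pow_succ, mul_assoc]⟩

theorem saturation_eq_self {K : Ideal R} {x : R} (hx : IsSMulRegular (R ⧸ K) x) :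
    saturation K x = K := by
  refine le_antisymm (fun a ha => ?_) (le_saturation K x)
  obtain ⟨n, hn⟩ := mem_saturation.1 ha
  exact isSMulRegular_quotient_iff.1 (hx.pow n) a hn

theorem not_saturation_le_saturation {K₁ K₂ : Ideal R} {x : R}
    (hx : IsSMulRegular (R ⧸ (K₁ ⊓ K₂)) x) (h : ¬ K₁ ≤ K₂) :
    ¬ saturation K₁ x ≤ saturation K₂ x := fun hle => h <| calc
  K₁ ≤ saturation K₁ x ⊓ saturation K₂ x :=
    le_inf (le_saturation K₁ x) ((le_saturation K₁ x).trans hle)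
  _ = K₁ ⊓ K₂ := by rw [← saturation_inf, saturation_eq_self hx]
  _ ≤ K₂ := inf_le_right

end Saturation

section Connectedness

variable {R : Type*} [CommRing R]

theorem mem_sup_span_singleton {K : Ideal R} {x a : R} :
    a ∈ K ⊔ Ideal.span {x} ↔ ∃ k ∈ K, ∃ b, a = k + x * b := by
  simp only [Submodule.mem_sup, Ideal.mem_span_singleton, Dvd.dvd]
  exact ⟨fun ⟨k, hk, _, ⟨b, rfl⟩, h⟩ => ⟨k, hk, b, h.symm⟩,
    fun ⟨k, hk, b, h⟩ => ⟨k, hk, x * b, ⟨b, rfl⟩, h.symm⟩⟩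

theorem inf_sup_span_singleton_of_isSMulRegular {K₁ K₂ : Ideal R} {x : R}
    (hx : IsSMulRegular (R ⧸ (K₁ ⊔ K₂)) x) :
    (K₁ ⊔ Ideal.span {x}) ⊓ (K₂ ⊔ Ideal.span {x}) = K₁ ⊓ K₂ ⊔ Ideal.span {x} := by
  refine le_antisymm ?_ (le_inf (sup_le_sup_right inf_le_left _) (sup_le_sup_right inf_le_right _))
  rintro a ⟨ha₁, ha₂⟩
  obtain ⟨k₁, hk₁, b₁, rfl⟩ := mem_sup_span_singleton.1 ha₁
  obtain ⟨k₂, hk₂, b₂, h⟩ := mem_sup_span_singleton.1 ha₂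
  have hmul : x * (b₂ - b₁) ∈ K₁ ⊔ K₂ := by
    rw [show x * (b₂ - b₁) = k₁ - k₂ by linear_combination -h]
    exact sub_mem (Ideal.mem_sup_left hk₁) (Ideal.mem_sup_right hk₂)
  obtain ⟨l₁, hl₁, l₂, hl₂, hl⟩ := Submodule.mem_sup.1 (isSMulRegular_quotient_iff.1 hx _ hmul)
  refine mem_sup_span_singleton.2 ⟨k₁ - x * l₁, ⟨?_, ?_⟩, b₁ + l₁, by ring⟩
  · exact sub_mem hk₁ (K₁.mul_mem_left x hl₁)
  · rw [show k₁ - x * l₁ = k₂ + x * l₂ by linear_combination h - x * hl]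
    exact add_mem hk₂ (K₂.mul_mem_left x hl₂)

theorem exists_mem_associatedPrimes_sup_le [IsNoetherianRing R] {K₁ K₂ : Ideal R} {x : R}
    (hx₁ : IsSMulRegular (R ⧸ K₁) x) (hx₂ : IsSMulRegular (R ⧸ K₂) x)
    (hx : ¬ IsSMulRegular (R ⧸ (K₁ ⊔ K₂)) x) :
    ∃ Q ∈ associatedPrimes R (R ⧸ (K₁ ⊓ K₂ ⊔ Ideal.span {x})), K₁ ⊔ K₂ ≤ Q := by
  rw [isSMulRegular_quotient_iff] at hx₁ hx₂ hx
  push Not at hx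
  obtain ⟨c, hxc, hc⟩ := hx
  obtain ⟨k₁, hk₁, k₂, hk₂, hk⟩ := Submodule.mem_sup.1 hxc
  have hne : Ideal.Quotient.mk (K₁ ⊓ K₂ ⊔ Ideal.span {x}) k₂ ≠ 0 := by
    rw [Ne, Ideal.Quotient.eq_zero_iff_mem, mem_sup_span_singleton]
    rintro ⟨l, ⟨hl₁, hl₂⟩, b, rfl⟩
    have hb : b ∈ K₂ := hx₂ b ((add_mem_cancel_left hl₂).1 hk₂)
    have hcb : c - b ∈ K₁ := hx₁ _ (by
      rw [show x * (c - b) = k₁ + l by linear_combination -hk]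
      exact add_mem hk₁ hl₁)
    have hcbb : c - b + b ∈ K₁ ⊔ K₂ := add_mem (Ideal.mem_sup_left hcb) (Ideal.mem_sup_right hb)
    exact hc (sub_add_cancel c b ▸ hcbb)
  obtain ⟨Q, hQ, hle⟩ := exists_le_isAssociatedPrime_of_isNoetherianRing R _ hne
  refine ⟨Q, hQ, le_trans (sup_le ?_ ?_) hle⟩ <;> intro a ha <;>
    rw [Submodule.mem_colon_singleton, Submodule.mem_bot, ← Ideal.Quotient.mk_eq_mk,
      ← Submodule.Quotient.mk_smul, Submodule.Quotient.mk_eq_zero, smul_eq_mul]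
  · exact Ideal.mem_sup_left ⟨K₁.mul_mem_right _ ha, K₂.mul_mem_left _ hk₂⟩
  · refine mem_sup_span_singleton.2
      ⟨-(a * k₁), neg_mem ⟨K₁.mul_mem_left _ hk₁, K₂.mul_mem_right _ ha⟩, a * c, ?_⟩
    linear_combination a * hk

theorem not_map_le_map_of_le_prime {T : Type*} [CommRing T] [Algebra R T] {m K₁ K₂ P : Ideal R}
    [m.IsPrime] [IsLocalization.AtPrime T m] (hP : P.IsPrime) (hPm : P ≤ m) (hK₂ : K₂ ≤ P)
    (hK₁ : ¬ K₁ ≤ P) : ¬ K₁.map (algebraMap R T) ≤ K₂.map (algebraMap R T) := by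
  intro hle
  have hP_map : K₁.map (algebraMap R T) ≤ P.map (algebraMap R T) := hle.trans (Ideal.map_mono hK₂)
  refine hK₁ (Ideal.le_comap_map.trans ((Ideal.comap_mono hP_map).trans ?_))
  exact (IsLocalization.under_map_of_isPrime_disjoint m.primeCompl T hP
    (Set.disjoint_compl_left_iff_subset.2 hPm)).le

variable {S : Type*} [CommRing S] [IsNoetherianRing S] [IsLocalRing S]

open IsLocalRing

theorem le_of_le_sup_span_singleton {K L : Ideal S} {x : S} (hxm : x ∈ maximalIdeal S)
    (hx : IsSMulRegular (S ⧸ L) x) (hKL : K ≤ L) (hL : L ≤ K ⊔ Ideal.span {x}) : L ≤ K := by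
  refine Submodule.le_of_le_smul_of_le_jacobson_bot (I := Ideal.span {x})
    (IsNoetherian.noetherian L)
    ((Ideal.span_singleton_le_iff_mem _).2 (maximalIdeal_le_jacobson _ hxm)) fun a ha => ?_
  obtain ⟨k, hk, b, rfl⟩ := mem_sup_span_singleton.1 (hL ha)
  have hb : b ∈ L := isSMulRegular_quotient_iff.1 hx b ((add_mem_cancel_left (hKL hk)).1 ha)
  exact Submodule.add_mem_sup hk
    (Submodule.smul_mem_smul (Ideal.mem_span_singleton_self x) hb)

theorem not_sup_span_singleton_le {K₁ K₂ : Ideal S} {x : S} (hxm : x ∈ maximalIdeal S)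
    (hx₁ : IsSMulRegular (S ⧸ K₁) x) (hx : IsSMulRegular (S ⧸ (K₁ ⊔ K₂)) x) (h : ¬ K₁ ≤ K₂) :
    ¬ K₁ ⊔ Ideal.span {x} ≤ K₂ ⊔ Ideal.span {x} := by
  refine fun hle => h ((le_of_le_sup_span_singleton hxm hx₁ inf_le_left ?_).trans inf_le_right)
  rw [← inf_sup_span_singleton_of_isSMulRegular hx]
  exact le_inf le_sup_left (le_sup_left.trans hle)

-- Cutting `R/(K₁ ∩ K₂)` by `x` either cuts `R/(K₁ + K₂)` as well, or leaves an associated prime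
-- above `K₁ + K₂`. Replacing the `Kᵢ` by their saturations does not change `K₁ ∩ K₂`, and it makes
-- `x` regular on both `R/Kᵢ`.
theorem length_le_ringKrullDim_quotient_sup_add_one {K₁ K₂ : Ideal S} (h₁₂ : ¬ K₁ ≤ K₂)
    (h₂₁ : ¬ K₂ ≤ K₁) {rs : List S} (hrs : ∀ r ∈ rs, r ∈ maximalIdeal S)
    (h : IsWeaklyRegular (S ⧸ (K₁ ⊓ K₂)) rs) :
    (rs.length : WithBot ℕ∞) ≤ ringKrullDim (S ⧸ (K₁ ⊔ K₂)) + 1 := by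
  induction rs generalizing K₁ K₂ with
  | nil =>
    have hne_top : K₁ ⊔ K₂ ≠ ⊤ := ne_top_of_le_ne_top (maximalIdeal.isMaximal S).ne_top
      (sup_le (le_maximalIdeal fun h => h₂₁ (h ▸ le_top))
        (le_maximalIdeal fun h => h₁₂ (h ▸ le_top)))
    have : Nontrivial (S ⧸ (K₁ ⊔ K₂)) := Ideal.Quotient.nontrivial_iff.2 hne_top
    simpa using add_nonneg ringKrullDim_nonneg_of_nontrivial zero_le_one
  | cons x rs ih =>
    rw [List.forall_mem_cons] at hrs
    obtain ⟨hx, h⟩ := (isWeaklyRegular_quotient_cons_iff _ x rs).1 h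
    let L₁ := saturation K₁ x
    let L₂ := saturation K₂ x
    have hinf : L₁ ⊓ L₂ = K₁ ⊓ K₂ := by rw [← saturation_inf, saturation_eq_self hx]
    have hL₁₂ : ¬ L₁ ≤ L₂ := not_saturation_le_saturation hx h₁₂
    have hL₂₁ : ¬ L₂ ≤ L₁ := not_saturation_le_saturation (inf_comm K₁ K₂ ▸ hx) h₂₁
    have hx₁ : IsSMulRegular (S ⧸ L₁) x := isSMulRegular_quotient_saturation K₁ x
    have hx₂ : IsSMulRegular (S ⧸ L₂) x := isSMulRegular_quotient_saturation K₂ x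
    have hdim : (rs.length : WithBot ℕ∞) ≤ ringKrullDim (S ⧸ (L₁ ⊔ L₂)) := by
      rw [← hinf] at h
      by_cases hreg : IsSMulRegular (S ⧸ (L₁ ⊔ L₂)) x
      · rw [← inf_sup_span_singleton_of_isSMulRegular hreg] at h
        refine (ih (not_sup_span_singleton_le hrs.1 hx₁ hreg hL₁₂)
          (not_sup_span_singleton_le hrs.1 hx₂ (sup_comm L₁ L₂ ▸ hreg) hL₂₁) hrs.2 h).trans ?_
        rw [← sup_sup_distrib_right]
        exact ringKrullDim_quotient_sup_span_singleton_add_one_le hreg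
      · obtain ⟨Q, hQ, hle⟩ := exists_mem_associatedPrimes_sup_le hx₁ hx₂ hreg
        exact (length_le_ringKrullDim_quotient_of_isLocalRing hrs.2 h hQ).trans
          (ringKrullDim_quotient_anti hle)
    have hle : K₁ ⊔ K₂ ≤ L₁ ⊔ L₂ := sup_le_sup (le_saturation K₁ x) (le_saturation K₂ x)
    rw [List.length_cons, Nat.cast_add, Nat.cast_one]
    gcongr
    exact hdim.trans (ringKrullDim_quotient_anti hle)

theorem length_le_ringKrullDim_quotient_sup_add_one_of_le_prime [IsNoetherianRing R]
    {m K₁ K₂ P₁ P₂ : Ideal R} [m.IsPrime] (hP₁ : P₁.IsPrime) (hP₂ : P₂.IsPrime) (hm₁ : P₁ ≤ m)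
    (hm₂ : P₂ ≤ m) (h₁₁ : K₁ ≤ P₁) (h₂₁ : ¬ K₂ ≤ P₁) (h₂₂ : K₂ ≤ P₂) (h₁₂ : ¬ K₁ ≤ P₂)
    {rs : List R} (hrs : ∀ r ∈ rs, r ∈ m) (h : IsWeaklyRegular (R ⧸ (K₁ ⊓ K₂)) rs) :
    (rs.length : WithBot ℕ∞) ≤ ringKrullDim (R ⧸ (K₁ ⊔ K₂)) + 1 := by
  let S := Localization.AtPrime m
  have hS := isWeaklyRegular_quotient_map_of_isLocalization m.primeCompl S h
  rw [IsLocalization.map_inf m.primeCompl] at hS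
  rw [← List.length_map (algebraMap R S)]
  calc _ ≤ ringKrullDim (S ⧸ (K₁.map (algebraMap R S) ⊔ K₂.map (algebraMap R S))) + 1 :=
        length_le_ringKrullDim_quotient_sup_add_one
          (not_map_le_map_of_le_prime (m := m) hP₂ hm₂ h₂₂ h₁₂)
          (not_map_le_map_of_le_prime (m := m) hP₁ hm₁ h₁₁ h₂₁)
          (forall_mem_map_algebraMap_maximalIdeal hrs) hS
    _ ≤ ringKrullDim (R ⧸ (K₁ ⊔ K₂)) + 1 := by
        rw [← Ideal.map_sup]
        gcongr
        exact ringKrullDim_quotient_map_le_of_isLocalization m.primeCompl S _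

end Connectedness

section ExactSequence

variable {R : Type*} [CommRing R]

theorem isWeaklyRegular_of_exact {M₁ M₂ M₃ : Type*} [AddCommGroup M₁] [Module R M₁]
    [AddCommGroup M₂] [Module R M₂] [AddCommGroup M₃] [Module R M₃] {f : M₁ →ₗ[R] M₂}
    {g : M₂ →ₗ[R] M₃} (hf : Function.Injective f) (hfg : Function.Exact f g)
    (hg : Function.Surjective g) {rs : List R} (h₁ : IsWeaklyRegular M₁ rs)
    (h₃ : IsWeaklyRegular M₃ rs) : IsWeaklyRegular M₂ rs := by
  induction rs generalizing M₁ M₂ M₃ with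
  | nil => exact IsWeaklyRegular.nil R M₂
  | cons x rs ih =>
    rw [isWeaklyRegular_cons_iff] at h₁ h₃ ⊢
    have hf' : Function.Injective (QuotSMulTop.map x f) := by
      rw [← LinearMap.exact_zero_iff_injective M₁] at hf
      rw [← LinearMap.exact_zero_iff_injective (QuotSMulTop x M₁), ← map_zero (QuotSMulTop.map x)]
      exact QuotSMulTop.map_first_exact_on_four_term_exact_of_isSMulRegular_last hf hfg h₃.1
    exact ⟨isSMulRegular_of_range_eq_ker hf hfg.linearMap_ker_eq.symm h₁.1 h₃.1,
      ih hf' (QuotSMulTop.map_exact x hfg hg) (QuotSMulTop.map_surjective x hg) h₁.2 h₃.2⟩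

theorem isWeaklyRegular_quotient_of_colon {K : Ideal R} {x : R} {rs : List R}
    (hcolon : IsWeaklyRegular (R ⧸ K.colon {x}) rs)
    (hsup : IsWeaklyRegular (R ⧸ (K ⊔ Ideal.span {x})) rs) : IsWeaklyRegular (R ⧸ K) rs := by
  have hmul : K.colon {x} ≤ Submodule.comap (LinearMap.lsmul R R x) K := fun a ha => by
    simpa [mul_comm] using Submodule.mem_colon_singleton.1 ha
  refine isWeaklyRegular_of_exact (f := Submodule.mapQ _ _ (LinearMap.lsmul R R x) hmul)
    (g := Submodule.factor le_sup_left) ?_ ?_ (Submodule.factor_surjective _) hcolon hsup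
  · rw [← LinearMap.ker_eq_bot, Submodule.ker_mapQ, ← LinearMap.le_ker_iff_map, Submodule.ker_mkQ]
    intro a ha
    simpa [Submodule.mem_colon_singleton, mul_comm] using ha
  · rw [LinearMap.exact_iff, Submodule.factor, Submodule.ker_mapQ, Submodule.range_mapQ]
    have hrange : (LinearMap.lsmul R R x).range = Ideal.span {x} := by
      ext a
      simp [Ideal.mem_span_singleton', mul_comm x]
    rw [hrange, Submodule.comap_id, Submodule.map_sup, Submodule.mkQ_map_self, bot_sup_eq]

end ExactSequence

section Depth

variable {R M : Type*} [CommRing R] [AddCommGroup M] [Module R M] {J : Ideal R}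

theorem exists_isRegular_length_eq_idealDepth [Nontrivial M] :
    ∃ rs : List R, rs.length = idealDepth J M ∧ (∀ r ∈ rs, r ∈ J) ∧ IsRegular M rs := by
  by_cases hbdd : BddAbove {d : ℕ | ∃ rs : List R, rs.length = d ∧ (∀ r ∈ rs, r ∈ J) ∧
      IsRegular M rs}
  · refine Nat.sSup_mem ?_ hbdd
    exact ⟨0, [], rfl, by simp, IsRegular.nil R M⟩
  · -- the supremum of an unbounded set of lengths is the junk value `0`
    refine ⟨[], ?_, by simp, IsRegular.nil R M⟩
    rw [idealDepth, Nat.sSup_of_not_bddAbove hbdd, List.length_nil]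

theorem idealDepth_eq_length_of_forall_length_le {rs : List R} (hrs : ∀ r ∈ rs, r ∈ J)
    (h : IsRegular M rs)
    (hmax : ∀ rs' : List R, (∀ r ∈ rs', r ∈ J) → IsRegular M rs' → rs'.length ≤ rs.length) :
    idealDepth J M = rs.length :=
  IsGreatest.csSup_eq ⟨⟨rs, rfl, hrs, h⟩, by rintro _ ⟨rs', rfl, hrs', h'⟩; exact hmax rs' hrs' h'⟩

theorem idealDepth_quotient_inf_le_ringKrullDim_add_one [IsNoetherianRing R] [J.IsPrime]
    {K₁ K₂ P₁ P₂ : Ideal R} (hP₁ : P₁.IsPrime) (hP₂ : P₂.IsPrime) (hJ₁ : P₁ ≤ J) (hJ₂ : P₂ ≤ J)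
    (h₁₁ : K₁ ≤ P₁) (h₂₁ : ¬ K₂ ≤ P₁) (h₂₂ : K₂ ≤ P₂) (h₁₂ : ¬ K₁ ≤ P₂) :
    (idealDepth J (R ⧸ (K₁ ⊓ K₂)) : WithBot ℕ∞) ≤ ringKrullDim (R ⧸ (K₁ ⊔ K₂)) + 1 := by
  have : Nontrivial (R ⧸ (K₁ ⊓ K₂)) :=
    Ideal.Quotient.nontrivial_iff.2 (ne_top_of_le_ne_top hP₁.ne_top (inf_le_left.trans h₁₁))
  obtain ⟨rs, hlen, hrs, h⟩ := exists_isRegular_length_eq_idealDepth (J := J) (M := R ⧸ (K₁ ⊓ K₂))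
  rw [← hlen]
  exact length_le_ringKrullDim_quotient_sup_add_one_of_le_prime hP₁ hP₂ hJ₁ hJ₂ h₁₁ h₂₁ h₂₂ h₁₂
    hrs h.toIsWeaklyRegular

variable [IsNoetherianRing R] [Module.Finite R M] [J.IsPrime] {P : Ideal R}

theorem idealDepth_le_ringKrullDim_quotient_of_mem_associatedPrimes
    (hP : P ∈ associatedPrimes R M) (hPJ : P ≤ J) :
    (idealDepth J M : WithBot ℕ∞) ≤ ringKrullDim (R ⧸ P) := by
  have : Nontrivial M := not_subsingleton_iff_nontrivial.1 fun _ => by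
    simp [associatedPrimes.eq_empty_of_subsingleton] at hP
  obtain ⟨rs, hlen, hrs, h⟩ := exists_isRegular_length_eq_idealDepth (J := J) (M := M)
  rw [← hlen]
  exact length_le_ringKrullDim_quotient_of_mem_associatedPrimes hrs h.toIsWeaklyRegular hP hPJ

theorem idealDepth_eq_length_of_ringKrullDim_quotient_eq (hP : P ∈ associatedPrimes R M)
    (hPJ : P ≤ J) {rs : List R} (hrs : ∀ r ∈ rs, r ∈ J) (h : IsRegular M rs)
    (hdim : ringKrullDim (R ⧸ P) = rs.length) : idealDepth J M = rs.length := by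
  refine idealDepth_eq_length_of_forall_length_le hrs h fun rs' hrs' h' => ?_
  have hle := length_le_ringKrullDim_quotient_of_mem_associatedPrimes hrs' h'.toIsWeaklyRegular
    hP hPJ
  rw [hdim] at hle
  exact_mod_cast hle

end Depth

section VarIdeal

variable {V k : Type*} [CommRing k]

variable (k) in
/-- The ideal of `k[V]` generated by the variables in `W`. -/
noncomputable def varIdeal (W : Set V) : Ideal (MvPolynomial V k) :=
  Ideal.span (X '' W)

theorem varIdeal_le_iff {W : Set V} {J : Ideal (MvPolynomial V k)} :
    varIdeal k W ≤ J ↔ ∀ i ∈ W, X i ∈ J := by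
  rw [varIdeal, Ideal.span_le, Set.image_subset_iff]
  rfl

theorem X_mem_varIdeal_iff [Nontrivial k] {W : Set V} {i : V} :
    (X i : MvPolynomial V k) ∈ varIdeal k W ↔ i ∈ W := by
  classical
  simp [varIdeal, mem_ideal_span_X_image, support_X, Finsupp.single_apply]

theorem varIdeal_le_varIdeal_iff [Nontrivial k] {W W' : Set V} :
    varIdeal k W ≤ varIdeal k W' ↔ W ⊆ W' := by
  simp only [varIdeal_le_iff, X_mem_varIdeal_iff, Set.subset_def]

theorem varIdeal_union (W W' : Set V) : varIdeal k (W ∪ W') = varIdeal k W ⊔ varIdeal k W' := by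
  rw [varIdeal, Set.image_union, Ideal.span_union, varIdeal, varIdeal]

theorem varIdeal_singleton (v : V) : varIdeal k {v} = Ideal.span {X v} := by
  rw [varIdeal, Set.image_singleton]

theorem varIdeal_univ : varIdeal k (Set.univ : Set V) = idealOfVars V k := by
  rw [varIdeal, Set.image_univ, idealOfVars]

theorem ker_killCompl_subtype_val_compl (W : Set V) :
    RingHom.ker (killCompl (R := k) (Subtype.val_injective (p := (· ∈ Wᶜ)))) = varIdeal k W := by
  classical
  set φ := killCompl (R := k) (Subtype.val_injective (p := (· ∈ Wᶜ))) with hφ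
  refine le_antisymm (fun f hf => ?_) (varIdeal_le_iff.2 fun i hi => ?_)
  · have hmk : ((Ideal.Quotient.mkₐ k (varIdeal k W)).comp (rename Subtype.val)).comp φ =
        Ideal.Quotient.mkₐ k (varIdeal k W) := by
      refine algHom_ext fun i => ?_
      by_cases hi : i ∈ W
      · have hX : X i ∈ varIdeal k W := Ideal.subset_span (Set.mem_image_of_mem X hi)
        simp [hφ, killCompl, hi, Ideal.Quotient.eq_zero_iff_mem.2 hX]
      · rw [AlgHom.comp_apply, AlgHom.comp_apply, ← rename_X (R := k) Subtype.val (⟨i, hi⟩ : ↥Wᶜ),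
          killCompl_rename_app]
    have hf0 := DFunLike.congr_fun hmk f
    rw [AlgHom.comp_apply, (RingHom.mem_ker).1 hf, map_zero] at hf0
    exact Ideal.Quotient.eq_zero_iff_mem.1 hf0.symm
  · simp [RingHom.mem_ker, hφ, killCompl, hi]

/-- The quotient of `k[V]` by the variables in `W` is the polynomial ring on the other variables. -/
noncomputable def quotientVarIdealEquiv (W : Set V) :
    (MvPolynomial V k ⧸ varIdeal k W) ≃+* MvPolynomial ↥Wᶜ k :=
  (Ideal.quotEquivOfEq (ker_killCompl_subtype_val_compl W).symm).trans
    (RingHom.quotientKerEquivOfRightInverse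
      (fun f => killCompl_rename_app (Subtype.val_injective (p := (· ∈ Wᶜ))) f))

theorem varIdeal_isPrime [IsDomain k] (W : Set V) : (varIdeal k W).IsPrime := by
  rw [← ker_killCompl_subtype_val_compl]
  exact RingHom.ker_isPrime _

theorem ringKrullDim_quotient_varIdeal {k : Type*} [Field k] [Finite V] (W : Set V) :
    ringKrullDim (MvPolynomial V k ⧸ varIdeal k W) = Wᶜ.ncard := by
  rw [ringKrullDim_eq_of_ringEquiv (quotientVarIdealEquiv W),
    ringKrullDim_of_isNoetherianRing, ringKrullDim_eq_zero_of_field, zero_add,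
    Set.ncard]
  rfl

end VarIdeal

section DimensionBound

variable {R : Type*} [CommRing R]

theorem ringKrullDim_quotient_le_of_forall_isPrime {J : Ideal R} {d : WithBot ℕ∞}
    (h : ∀ P : Ideal R, P.IsPrime → J ≤ P → ringKrullDim (R ⧸ P) ≤ d) :
    ringKrullDim (R ⧸ J) ≤ d := by
  rw [ringKrullDim_quotient, Order.krullDim]
  refine iSup_le fun l => ?_
  refine le_trans ?_ (h l.head.1.asIdeal l.head.1.isPrime l.head.2)
  rw [ringKrullDim_quotient]
  let l' : LTSeries (PrimeSpectrum.zeroLocus (l.head.1.asIdeal : Set R)) :=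
    LTSeries.mk l.length (fun i => ⟨(l i).1, l.head_le i⟩) fun _ _ hij => l.strictMono hij
  exact Order.LTSeries.length_le_krullDim l'

end DimensionBound

section EdgeIdeal

variable {V : Type*} (k : Type*) [CommRing k] (G : SimpleGraph V)

/-- The edge ideal of a simple graph on an arbitrary vertex type; `edgeIdealG` is the case
`V = Fin m`. -/
noncomputable def edgeIdeal : Ideal (MvPolynomial V k) :=
  Ideal.span {p | ∃ i j, G.Adj i j ∧ p = X i * X j}

theorem single_add_single_le_iff {i j : V} (hij : i ≠ j) {s : V →₀ ℕ} :
    Finsupp.single i 1 + Finsupp.single j 1 ≤ s ↔ s i ≠ 0 ∧ s j ≠ 0 := by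
  classical
  rw [← Nat.one_le_iff_ne_zero, ← Nat.one_le_iff_ne_zero, ← Finsupp.single_le_iff,
    ← Finsupp.single_le_iff, ← sup_le_iff]
  have hsup : Finsupp.single i 1 + Finsupp.single j 1 =
      Finsupp.single i 1 ⊔ Finsupp.single j 1 := by
    ext a
    simp only [Finsupp.add_apply, Finsupp.sup_apply, Finsupp.single_apply]
    grind
  rw [hsup]

variable {k G}

theorem mem_edgeIdeal_sup_varIdeal_iff {Z : Set V} {f : MvPolynomial V k} :
    f ∈ edgeIdeal k G ⊔ varIdeal k Z ↔
      ∀ s ∈ f.support, (∃ i j, G.Adj i j ∧ s i ≠ 0 ∧ s j ≠ 0) ∨ ∃ z ∈ Z, s z ≠ 0 := by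
  have hspan : edgeIdeal k G ⊔ varIdeal k Z = Ideal.span ((fun s => monomial s (1 : k)) ''
      ({s | ∃ i j, G.Adj i j ∧ s = Finsupp.single i 1 + Finsupp.single j 1} ∪
        (fun z => Finsupp.single z 1) '' Z)) := by
    rw [edgeIdeal, varIdeal, ← Ideal.span_union, Set.image_union, Set.image_image]
    congr 2
    ext p
    simp [X, monomial_mul, eq_comm]
  rw [hspan, mem_ideal_span_monomial_image]
  refine forall₂_congr fun s _ => ⟨?_, ?_⟩
  · rintro ⟨_, ⟨i, j, h, rfl⟩ | ⟨z, hz, rfl⟩, hle⟩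
    · exact Or.inl ⟨i, j, h, (single_add_single_le_iff h.ne).1 hle⟩
    · exact Or.inr ⟨z, hz, Nat.one_le_iff_ne_zero.1 (Finsupp.single_le_iff.1 hle)⟩
  · rintro (⟨i, j, h, hs⟩ | ⟨z, hz, hs⟩)
    · exact ⟨_, Or.inl ⟨i, j, h, rfl⟩, (single_add_single_le_iff h.ne).2 hs⟩
    · exact ⟨_, Or.inr ⟨z, hz, rfl⟩, Finsupp.single_le_iff.2 (Nat.one_le_iff_ne_zero.2 hs)⟩

theorem mem_edgeIdeal_iff {f : MvPolynomial V k} :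
    f ∈ edgeIdeal k G ↔ ∀ s ∈ f.support, ∃ i j, G.Adj i j ∧ s i ≠ 0 ∧ s j ≠ 0 := by
  simpa [varIdeal] using mem_edgeIdeal_sup_varIdeal_iff (G := G) (Z := ∅) (f := f)

theorem colon_edgeIdeal_sup_varIdeal {Z : Set V} {v : V} (hv : v ∉ Z) :
    (edgeIdeal k G ⊔ varIdeal k Z).colon {(X v : MvPolynomial V k)} =
      edgeIdeal k G ⊔ varIdeal k (Z ∪ G.neighborSet v) := by
  classical
  ext f
  rw [Submodule.mem_colon_singleton, smul_eq_mul, mul_comm, mem_edgeIdeal_sup_varIdeal_iff,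
    mem_edgeIdeal_sup_varIdeal_iff, support_X_mul]
  simp only [Finset.mem_map, forall_exists_index, and_imp, forall_apply_eq_imp_iff₂]
  refine forall₂_congr fun s _ => ?_
  have hXs (i : V) : (addLeftEmbedding (Finsupp.single v 1) s) i ≠ 0 ↔ v = i ∨ s i ≠ 0 := by
    simp only [addLeftEmbedding_apply, Finsupp.add_apply, Finsupp.single_apply]
    grind
  simp only [hXs, Set.mem_union, SimpleGraph.mem_neighborSet]
  constructor
  · rintro (⟨i, j, h, rfl | hi, rfl | hj⟩ | ⟨z, hz, rfl | hs⟩)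
    · exact absurd h (G.irrefl)
    · exact Or.inr ⟨j, Or.inr h, hj⟩
    · exact Or.inr ⟨i, Or.inr h.symm, hi⟩
    · exact Or.inl ⟨i, j, h, hi, hj⟩
    · exact absurd hz hv
    · exact Or.inr ⟨z, Or.inl hz, hs⟩
  · rintro (⟨i, j, h, hi, hj⟩ | ⟨z, hz | hz, hs⟩)
    · exact Or.inl ⟨i, j, h, Or.inr hi, Or.inr hj⟩
    · exact Or.inr ⟨z, hz, Or.inr hs⟩
    · exact Or.inl ⟨v, z, hz, Or.inl rfl, Or.inr hs⟩

theorem edgeIdeal_sup_varIdeal_inf_edgeIdeal_sup_varIdeal {A B : Set V}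
    (h : ∀ a ∈ A, ∀ b ∈ B, G.Adj a b) :
    (edgeIdeal k G ⊔ varIdeal k A) ⊓ (edgeIdeal k G ⊔ varIdeal k B) = edgeIdeal k G := by
  refine le_antisymm (fun f hf => mem_edgeIdeal_iff.2 fun s hs => ?_)
    (le_inf le_sup_left le_sup_left)
  rcases mem_edgeIdeal_sup_varIdeal_iff.1 hf.1 s hs with hedge | ⟨a, ha, hsa⟩
  · exact hedge
  rcases mem_edgeIdeal_sup_varIdeal_iff.1 hf.2 s hs with hedge | ⟨b, hb, hsb⟩
  · exact hedge
  exact ⟨a, b, h a ha b hb, hsa, hsb⟩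

theorem isVertexCover_setOf_X_mem {Q : Ideal (MvPolynomial V k)} (hQ : Q.IsPrime)
    (h : edgeIdeal k G ≤ Q) : G.IsVertexCover {i | X i ∈ Q} := fun i j hij =>
  hQ.mem_or_mem (h (Ideal.subset_span ⟨i, j, hij, rfl⟩))

theorem edgeIdeal_le_varIdeal {C : Set V} (hC : G.IsVertexCover C) :
    edgeIdeal k G ≤ varIdeal k C := by
  rw [edgeIdeal, Ideal.span_le]
  rintro _ ⟨i, j, hij, rfl⟩
  rcases hC hij with hi | hj
  · exact Ideal.mul_mem_right _ _ (Ideal.subset_span (Set.mem_image_of_mem X hi))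
  · exact Ideal.mul_mem_left _ _ (Ideal.subset_span (Set.mem_image_of_mem X hj))

theorem edgeIdeal_le_idealOfVars : edgeIdeal k G ≤ idealOfVars V k :=
  varIdeal_univ (V := V) (k := k) ▸ edgeIdeal_le_varIdeal (by simp)

theorem varIdeal_le_idealOfVars (W : Set V) : varIdeal k W ≤ idealOfVars V k :=
  varIdeal_le_iff.2 fun i _ => Ideal.subset_span ⟨i, rfl⟩

theorem idealOfVars_isPrime [IsDomain k] : (idealOfVars V k).IsPrime :=
  varIdeal_univ (V := V) (k := k) ▸ varIdeal_isPrime _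

theorem varIdeal_mem_associatedPrimes [IsDomain k] [IsNoetherianRing k] [Finite V] {C : Set V}
    (hC : Minimal G.IsVertexCover C) :
    varIdeal k C ∈ associatedPrimes (MvPolynomial V k) (MvPolynomial V k ⧸ edgeIdeal k G) := by
  refine Module.associatedPrimes.minimalPrimes_annihilator_subset_associatedPrimes _ _ ?_
  rw [Ideal.annihilator_quotient]
  refine ⟨⟨varIdeal_isPrime C, edgeIdeal_le_varIdeal hC.1⟩, fun Q ⟨hQ, hle⟩ hQC => ?_⟩
  exact varIdeal_le_iff.2 (hC.2 (isVertexCover_setOf_X_mem hQ hle)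
    fun i hi => X_mem_varIdeal_iff.1 (hQC hi))

theorem ringKrullDim_quotient_edgeIdeal_sup_varIdeal_le {k : Type*} [Field k] [Finite V]
    {Z : Set V} {d : ℕ} (h : ∀ S, G.IsIndepSet S → Disjoint S Z → S.ncard ≤ d) :
    ringKrullDim (MvPolynomial V k ⧸ (edgeIdeal k G ⊔ varIdeal k Z)) ≤ d := by
  refine ringKrullDim_quotient_le_of_forall_isPrime fun Q hQ hle => ?_
  rw [sup_le_iff, varIdeal_le_iff] at hle
  calc ringKrullDim (MvPolynomial V k ⧸ Q)
      ≤ ringKrullDim (MvPolynomial V k ⧸ varIdeal k {i | X i ∈ Q}) :=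
        ringKrullDim_quotient_anti (varIdeal_le_iff.2 fun _ => id)
    _ = ({i | X i ∈ Q}ᶜ.ncard : ℕ) := ringKrullDim_quotient_varIdeal _
    _ ≤ d := by
      have hindep := SimpleGraph.isIndepSet_compl_iff_isVertexCover.2
        (isVertexCover_setOf_X_mem hQ hle.1)
      exact_mod_cast h _ hindep (Set.disjoint_compl_left_iff_subset.2 hle.2)

end EdgeIdeal

section AntitoneInvolution

variable {V : Type*} [PartialOrder V] {σ : V → V} {Z : Set V} {v : V}

theorem forall_mem_union_Iic_apply_notMem (hσ : Function.Involutive σ) (hanti : Antitone σ)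
    (hZ : IsLowerSet Z) (hZσ : ∀ z ∈ Z, σ z ∉ Z) (hv : v ∉ Z) (hvσ : ¬ v ≤ σ v) :
    ∀ z ∈ Z ∪ Set.Iic (σ v), σ z ∉ Z ∪ Set.Iic (σ v) := by
  have hle {z : V} (h : σ z ≤ σ v) : v ≤ z := by simpa only [hσ _] using hanti h
  rintro z (hz | hz) (hσz | hσz)
  · exact hZσ z hz hσz
  · exact hv (hZ (hle hσz) hz)
  · exact hv (hZ (hle (by rwa [hσ])) hσz)
  · exact hvσ ((hle hσz).trans hz)

theorem forall_mem_union_singleton_apply_notMem (hσ : Function.Involutive σ)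
    (hZσ : ∀ z ∈ Z, σ z ∉ Z) (hσv : σ v ∉ Z) (hvσ : ¬ v ≤ σ v) :
    ∀ z ∈ Z ∪ {v}, σ z ∉ Z ∪ {v} := by
  rintro z (hz | rfl) (hσz | hσz)
  · exact hZσ z hz hσz
  · exact hσv (by rwa [← hσz, hσ])
  · exact hσv hσz
  · exact hvσ (hσz : σ z = z).ge

theorem isLowerSet_union_singleton (hanti : Antitone σ) (hZ : IsLowerSet Z)
    (hv : Minimal (fun u => u ∉ Z ∧ σ u ∉ Z) v) : IsLowerSet (Z ∪ {v}) := by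
  rintro z u huz (hz | rfl)
  · exact Or.inl (hZ huz hz)
  · refine or_iff_not_imp_left.2 fun hu => huz.antisymm (hv.2 ⟨hu, fun hσu => ?_⟩ huz)
    exact hv.1.2 (hZ (hanti huz) hσu)

end AntitoneInvolution

section RegularSequence

variable {V k : Type*} [CommRing k]

theorem varIdeal_sup_span_X_add_X {W : Set V} {a b : V} (h : a ∈ W ∨ b ∈ W) :
    varIdeal k W ⊔ Ideal.span {X a + X b} = varIdeal k (W ∪ {a, b}) := by
  wlog ha : a ∈ W generalizing a b
  · rw [add_comm, Set.pair_comm, this h.symm (h.resolve_left ha)]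
  have hXa : (X a : MvPolynomial V k) ∈ varIdeal k W := varIdeal_le_iff.1 le_rfl a ha
  rw [varIdeal_union, Set.insert_eq, varIdeal_union, ← sup_assoc, varIdeal_singleton,
    varIdeal_singleton, sup_eq_left.2 ((Ideal.span_singleton_le_iff_mem _).2 hXa)]
  refine le_antisymm (sup_le le_sup_left ?_) (sup_le le_sup_left ?_) <;>
    rw [Ideal.span_singleton_le_iff_mem]
  · exact add_mem (Ideal.mem_sup_left hXa) (Ideal.mem_sup_right (Ideal.mem_span_singleton_self _))
  · exact (Ideal.add_mem_iff_right _ (Ideal.mem_sup_left hXa)).1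
      (Ideal.mem_sup_right (Ideal.mem_span_singleton_self _))

theorem isSMulRegular_quotient_varIdeal [IsDomain k] {W : Set V} {a b : V}
    (h : a ∈ W ↔ b ∉ W) :
    IsSMulRegular (MvPolynomial V k ⧸ varIdeal k W) (X a + X b : MvPolynomial V k) := by
  refine isSMulRegular_quotient_iff.2 fun f hf => ?_
  refine ((varIdeal_isPrime W).mem_or_mem hf).resolve_left fun hab => ?_
  by_cases ha : a ∈ W
  · rw [Ideal.add_mem_iff_right _ (X_mem_varIdeal_iff.2 ha), X_mem_varIdeal_iff] at hab
    exact h.1 ha hab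
  · have hb : b ∈ W := by_contra fun hb => ha (h.2 hb)
    rw [Ideal.add_mem_iff_left _ (X_mem_varIdeal_iff.2 hb), X_mem_varIdeal_iff] at hab
    exact ha hab

variable {σ : V → V} {l : List V}

theorem isWeaklyRegular_quotient_varIdeal [IsDomain k] (hσ : Function.Involutive σ)
    (hl : l.Pairwise fun u v => u ≠ v ∧ u ≠ σ v) {W : Set V} (hW : ∀ v ∈ l, v ∈ W ↔ σ v ∉ W) :
    IsWeaklyRegular (MvPolynomial V k ⧸ varIdeal k W)
      (l.map fun v => (X v + X (σ v) : MvPolynomial V k)) := by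
  induction l generalizing W with
  | nil => exact IsWeaklyRegular.nil _ _
  | cons v l ih =>
    rw [List.pairwise_cons] at hl
    rw [List.forall_mem_cons] at hW
    have hmem : v ∈ W ∨ σ v ∈ W := or_iff_not_imp_right.2 hW.1.2
    rw [List.map_cons, isWeaklyRegular_quotient_cons_iff, varIdeal_sup_span_X_add_X hmem]
    refine ⟨isSMulRegular_quotient_varIdeal hW.1, ih hl.2 fun u hu => ?_⟩
    obtain ⟨hvu, hvσu⟩ := hl.1 u hu
    have hσvu : σ v ≠ u := fun h => hvσu (by rw [← h, hσ])
    have hσvσu : σ v ≠ σ u := hσ.injective.ne hvu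
    simp [hvu.symm, hvσu.symm, hσvu.symm, hσvσu.symm, hW.2 u hu]

variable [PartialOrder V] [Finite V] {G : SimpleGraph V}

-- Pick a minimal `v` with `v, σ v ∉ Z` and compare the colon by `X v`, which enlarges `Z` by
-- `Iic (σ v)`, with the sum with `X v`, which enlarges `Z` by `v`; both keep `Z` a lower set. Once
-- no such `v` is left, `Z` is a vertex cover and the quotient is a polynomial ring.
theorem isWeaklyRegular_quotient_edgeIdeal_sup_varIdeal [IsDomain k]
    (hσ : Function.Involutive σ) (hG : ∀ u w, G.Adj u w ↔ u ≤ σ w)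
    (hl : l.Pairwise fun u v => u ≠ v ∧ u ≠ σ v) {Z : Set V} (hZ : IsLowerSet Z)
    (hZσ : ∀ z ∈ Z, σ z ∉ Z) :
    IsWeaklyRegular (MvPolynomial V k ⧸ (edgeIdeal k G ⊔ varIdeal k Z))
      (l.map fun v => (X v + X (σ v) : MvPolynomial V k)) := by
  have hanti : Antitone σ := fun u w huw =>
    (hG _ _).1 ((hG u (σ w)).2 (by rwa [hσ])).symm
  have hirrefl (u : V) : ¬ u ≤ σ u := fun h => G.irrefl ((hG u u).2 h)
  induction Z using WellFoundedGT.induction with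
  | _ Z ih =>
  by_cases hU : ∀ v, v ∈ Z ∨ σ v ∈ Z
  · have hcover : G.IsVertexCover Z := fun u w huw =>
      (hU w).symm.imp_left fun hw => hZ ((hG u w).1 huw) hw
    rw [sup_eq_right.2 (edgeIdeal_le_varIdeal hcover)]
    exact isWeaklyRegular_quotient_varIdeal hσ hl fun v _ =>
      ⟨hZσ v, fun hv => (hU v).resolve_right hv⟩
  push Not at hU
  obtain ⟨v, hv⟩ := (Set.toFinite {v | v ∉ Z ∧ σ v ∉ Z}).exists_minimal hU
  refine isWeaklyRegular_quotient_of_colon (x := X v) ?_ ?_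
  · have hN : G.neighborSet v = Set.Iic (σ v) := by
      ext u
      rw [SimpleGraph.mem_neighborSet, G.adj_comm, hG, Set.mem_Iic]
    rw [colon_edgeIdeal_sup_varIdeal hv.1.1, hN]
    refine ih _ ?_ (hZ.union (isLowerSet_Iic _))
      (forall_mem_union_Iic_apply_notMem hσ hanti hZ hZσ hv.1.1 (hirrefl v))
    exact (Set.ssubset_iff_of_subset Set.subset_union_left).2 ⟨σ v, Or.inr le_rfl, hv.1.2⟩
  · rw [sup_assoc, ← varIdeal_singleton, ← varIdeal_union]
    refine ih _ ?_ (isLowerSet_union_singleton hanti hZ hv)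
      (forall_mem_union_singleton_apply_notMem hσ hZσ hv.1.2 (hirrefl v))
    exact (Set.ssubset_iff_of_subset Set.subset_union_left).2 ⟨v, Or.inr rfl, hv.1.1⟩

end RegularSequence

section Matching

variable {V : Type*} {G : SimpleGraph V}

theorem isIndepSet_union {S T : Set V} (hS : G.IsIndepSet S) (hT : G.IsIndepSet T)
    (hST : ∀ s ∈ S, ∀ t ∈ T, ¬ G.Adj s t) : G.IsIndepSet (S ∪ T) :=
  Set.pairwise_union.2 ⟨hS, hT, fun s hs t ht _ => ⟨hST s hs t ht, fun h => hST s hs t ht h.symm⟩⟩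

theorem isIndepSet_pair {v w : V} (h : ¬ G.Adj v w) : G.IsIndepSet {v, w} :=
  Set.pairwise_pair.2 fun _ => ⟨h, fun h' => h h'.symm⟩

theorem not_adj_of_isIndepSet {S : Set V} (hS : G.IsIndepSet S) {v w : V} (hv : v ∈ S)
    (hw : w ∈ S) : ¬ G.Adj v w := fun h => hS hv hw h.ne h

-- Berge: compare a maximum independent set `M` through a neighbour of `S` with the independent
-- set obtained from `M` by exchanging `M ∩ N(S)` for `S \ M`, then induct on `S ∩ M`.
theorem ncard_le_ncard_biUnion_neighborSet [Finite V] (hiso : ∀ v, ∃ w, G.Adj v w)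
    (hmax : ∀ v, ∃ M, G.IsIndepSet M ∧ v ∈ M ∧ ∀ S, G.IsIndepSet S → S.ncard ≤ M.ncard)
    {S : Set V} (hS : G.IsIndepSet S) : S.ncard ≤ (⋃ v ∈ S, G.neighborSet v).ncard := by
  induction S using WellFoundedLT.induction with
  | _ S ih =>
  obtain rfl | ⟨s, hs⟩ := S.eq_empty_or_nonempty
  · simp
  obtain ⟨u, hsu⟩ := hiso s
  obtain ⟨M, hM, huM, hMmax⟩ := hmax u
  set N := ⋃ v ∈ S, G.neighborSet v
  have hmemN {v x : V} (hv : v ∈ S) (hx : G.Adj v x) : x ∈ N := Set.mem_biUnion hv hx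
  have hexchange : (M \ N).ncard + (S \ M).ncard ≤ M.ncard := by
    rw [← Set.ncard_union_eq (Set.disjoint_sdiff_right.mono_left Set.sdiff_subset)]
    refine hMmax _ (isIndepSet_union (hM.mono Set.sdiff_subset) (hS.mono Set.sdiff_subset) ?_)
    exact fun x hx v hv hxv => hx.2 (hmemN hv.1 hxv.symm)
  have hrest : (S ∩ M).ncard ≤ (N \ M).ncard := by
    have hlt : S ∩ M ⊂ S := (Set.ssubset_iff_of_subset Set.inter_subset_left).2
      ⟨s, hs, fun h => not_adj_of_isIndepSet hM h.2 huM hsu⟩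
    refine (ih _ hlt (hS.mono Set.inter_subset_left)).trans (Set.ncard_le_ncard ?_)
    refine Set.iUnion₂_subset fun v hv x hx => ⟨hmemN hv.1 hx, fun hxM => ?_⟩
    exact not_adj_of_isIndepSet hM hv.2 hxM hx
  have hS' := Set.ncard_inter_add_ncard_sdiff_eq_ncard S M
  have hM' := Set.ncard_inter_add_ncard_sdiff_eq_ncard M N
  have hN' := Set.ncard_inter_add_ncard_sdiff_eq_ncard N M
  rw [Set.inter_comm] at hN'
  lia

theorem exists_involutive_of_equiv_compl {M : Set V} (e : M ≃ ↥Mᶜ) :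
    ∃ σ : V → V, Function.Involutive σ ∧ ∀ y : M, σ y = e y := by
  classical
  let s := Equiv.Set.sumCompl M
  let τ : M ⊕ ↥Mᶜ → M ⊕ ↥Mᶜ := Sum.elim (Sum.inr ∘ e) (Sum.inl ∘ e.symm)
  have hτ : Function.Involutive τ := by rintro (y | y) <;> simp [τ]
  exact ⟨s ∘ τ ∘ s.symm, fun v => by simp [hτ _], fun y => by simp [s, τ]⟩

theorem exists_involutive_adj_of_forall_ncard_le [Finite V] {M : Set V} (hM : G.IsIndepSet M)
    (hcard : 2 * M.ncard = Nat.card V)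
    (hhall : ∀ S ⊆ M, S.ncard ≤ (⋃ v ∈ S, G.neighborSet v).ncard) :
    ∃ σ : V → V, Function.Involutive σ ∧ ∀ v, G.Adj v (σ v) := by
  classical
  have := Fintype.ofFinite V
  obtain ⟨f, hf, hadj⟩ := (Finset.all_card_le_biUnion_card_iff_exists_injective
    (fun y : M => G.neighborFinset y)).1 fun s => by
      have h := hhall (s.map (Function.Embedding.subtype _) : Finset V) (by simp)
      rw [Set.ncard_coe_finset, Finset.card_map] at h
      refine h.trans_eq ?_
      rw [← Set.ncard_coe_finset]
      congr 1
      ext x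
      simp
  simp only [SimpleGraph.mem_neighborFinset] at hadj
  let g : M → ↥Mᶜ := fun y => ⟨f y, fun hy => not_adj_of_isIndepSet hM y.2 hy (hadj y)⟩
  have hg : Function.Bijective g := by
    rw [Nat.bijective_iff_injective_and_card]
    refine ⟨fun a b h => hf (congrArg Subtype.val h), ?_⟩
    have := Set.ncard_add_ncard_compl M
    rw [Nat.card_coe_set_eq, Nat.card_coe_set_eq]
    lia
  obtain ⟨σ, hσ, hσe⟩ := exists_involutive_of_equiv_compl (Equiv.ofBijective g hg)
  have hadjM (y : M) : G.Adj y (σ y) := hσe y ▸ hadj y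
  refine ⟨σ, hσ, fun v => ?_⟩
  by_cases hv : v ∈ M
  · exact hadjM ⟨v, hv⟩
  · obtain ⟨y, hy⟩ := hg.2 ⟨v, hv⟩
    have hyv : σ y = v := (hσe y).trans (congrArg Subtype.val hy)
    rw [← hyv, hσ]
    exact (hadjM y).symm

theorem mem_or_apply_mem_of_isIndepSet [Finite V] {σ : V → V} (hσ : Function.Involutive σ)
    (hadj : ∀ v, G.Adj v (σ v)) {M : Set V} (hM : G.IsIndepSet M)
    (hcard : 2 * M.ncard = Nat.card V) (v : V) : v ∈ M ∨ σ v ∈ M := by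
  have hdisj : Disjoint M (σ '' M) := Set.disjoint_left.2 fun x hx ⟨y, hy, hyx⟩ =>
    not_adj_of_isIndepSet hM hy hx (hyx ▸ hadj y)
  have huniv : M ∪ σ '' M = Set.univ := by
    refine Set.eq_of_subset_of_ncard_le (Set.subset_univ _) ?_
    rw [Set.ncard_univ, Set.ncard_union_eq hdisj, Set.ncard_image_of_injective _ hσ.injective]
    lia
  refine (huniv ▸ Set.mem_univ v : v ∈ M ∪ σ '' M).imp_right ?_
  rintro ⟨y, hy, rfl⟩
  rwa [hσ]

end Matching

section VeryWellCovered

variable {V : Type*} {G : SimpleGraph V}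

/-- A graph is very well-covered if it has no isolated vertices and each of its minimal vertex
covers contains exactly half of the vertices. -/
def IsVeryWellCovered (G : SimpleGraph V) : Prop :=
  (∀ v, ∃ w, G.Adj v w) ∧ ∀ C, Minimal G.IsVertexCover C → 2 * C.ncard = Nat.card V

theorem minimal_isVertexCover_compl_iff {M : Set V} :
    Minimal G.IsVertexCover Mᶜ ↔ Maximal G.IsIndepSet M := by
  rw [Minimal, Maximal, compl_surjective.forall, SimpleGraph.isVertexCover_compl]
  simp only [SimpleGraph.isVertexCover_compl, compl_le_compl_iff_le]

namespace IsVeryWellCovered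

variable [Finite V]

theorem exists_superset_isIndepSet (hG : IsVeryWellCovered G) {S : Set V}
    (hS : G.IsIndepSet S) : ∃ M, S ⊆ M ∧ G.IsIndepSet M ∧ 2 * M.ncard = Nat.card V := by
  obtain ⟨M, hSM, hM⟩ := exists_maximal_ge_of_wellFoundedGT G.IsIndepSet S hS
  have hC := hG.2 Mᶜ (minimal_isVertexCover_compl_iff.2 hM)
  have := Set.ncard_add_ncard_compl M
  exact ⟨M, hSM, hM.1, by lia⟩

theorem two_mul_ncard_le (hG : IsVeryWellCovered G) {S : Set V} (hS : G.IsIndepSet S) :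
    2 * S.ncard ≤ Nat.card V := by
  obtain ⟨M, hSM, -, hM⟩ := hG.exists_superset_isIndepSet hS
  have := Set.ncard_le_ncard hSM
  lia

theorem exists_involutive_adj (hG : IsVeryWellCovered G) :
    ∃ σ : V → V, Function.Involutive σ ∧ ∀ v, G.Adj v (σ v) := by
  obtain ⟨M, -, hM, hcard⟩ := hG.exists_superset_isIndepSet (Set.pairwise_empty _)
  refine exists_involutive_adj_of_forall_ncard_le hM hcard fun S hS =>
    ncard_le_ncard_biUnion_neighborSet hG.1 (fun v => ?_) (hM.mono hS)
  obtain ⟨M', hvM', hM', hcard'⟩ := hG.exists_superset_isIndepSet (Set.pairwise_singleton v _)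
  refine ⟨M', hM', hvM' rfl, fun S hS => ?_⟩
  have := hG.two_mul_ncard_le hS
  lia

theorem adj_trans (hG : IsVeryWellCovered G) {σ : V → V} (hσ : Function.Involutive σ)
    (hadj : ∀ v, G.Adj v (σ v)) {u w z : V} (hwu : G.Adj w (σ u)) (huz : G.Adj u (σ z)) :
    G.Adj w (σ z) := by
  by_contra hwz
  obtain ⟨M, hsub, hM, hcard⟩ := hG.exists_superset_isIndepSet (isIndepSet_pair hwz)
  rcases mem_or_apply_mem_of_isIndepSet hσ hadj hM hcard u with hu | hu
  · exact not_adj_of_isIndepSet hM hu (hsub (by simp)) huz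
  · exact not_adj_of_isIndepSet hM (hsub (by simp)) hu hwu

theorem exists_partialOrder_adj_iff (hG : IsVeryWellCovered G)
    (htwin : Function.Injective G.neighborSet) {σ : V → V} (hσ : Function.Involutive σ)
    (hadj : ∀ v, G.Adj v (σ v)) : ∃ _ : PartialOrder V, ∀ u w, G.Adj u w ↔ u ≤ σ w := by
  have hsub {u z : V} (h : G.Adj u (σ z)) : G.neighborSet z ⊆ G.neighborSet u := fun x hx => by
    rw [← hσ x] at hx ⊢
    exact hG.adj_trans hσ hadj h hx
  refine ⟨{ le u z := G.Adj u (σ z), le_refl := hadj, le_trans _ _ _ := hG.adj_trans hσ hadj,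
            le_antisymm u z huz hzu := htwin ((hsub hzu).antisymm (hsub huz)) }, fun u w => ?_⟩
  change _ ↔ G.Adj u (σ (σ w))
  rw [hσ]

end IsVeryWellCovered

end VeryWellCovered

section CohenMacaulay

variable {V k : Type*} [Field k] {G : SimpleGraph V}

variable (k G) in
/-- A graph is Cohen–Macaulay over `k` if the quotient of `k[V]` by its edge ideal has depth, taken
with respect to the ideal of all variables, equal to its dimension. -/
def IsCohenMacaulayGraph : Prop :=
  ringKrullDim (MvPolynomial V k ⧸ edgeIdeal k G) =
    (idealDepth (idealOfVars V k) (MvPolynomial V k ⧸ edgeIdeal k G) : WithBot ℕ∞)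

variable [Finite V]

theorem idealDepth_edgeIdeal_le_ncard_compl {C : Set V} (hC : Minimal G.IsVertexCover C) :
    idealDepth (idealOfVars V k) (MvPolynomial V k ⧸ edgeIdeal k G) ≤ Cᶜ.ncard := by
  have := idealOfVars_isPrime (V := V) (k := k)
  have hle := idealDepth_le_ringKrullDim_quotient_of_mem_associatedPrimes
    (varIdeal_mem_associatedPrimes (k := k) hC) (varIdeal_le_idealOfVars C)
  rw [ringKrullDim_quotient_varIdeal] at hle
  exact_mod_cast hle

theorem ncard_le_ringKrullDim_quotient_edgeIdeal {S : Set V} (hS : G.IsIndepSet S) :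
    (S.ncard : WithBot ℕ∞) ≤ ringKrullDim (MvPolynomial V k ⧸ edgeIdeal k G) := by
  have hle := ringKrullDim_quotient_anti
    (edgeIdeal_le_varIdeal (k := k) (SimpleGraph.isVertexCover_compl.2 hS))
  rwa [ringKrullDim_quotient_varIdeal, compl_compl] at hle

theorem ncard_add_two_le_of_disjoint {S : Set V} {v w : V} {d : ℕ}
    (hd : ∀ S, G.IsIndepSet S → S.ncard ≤ d) (hvw : v ≠ w)
    (heq : G.neighborSet v = G.neighborSet w) (hS : G.IsIndepSet S)
    (hdisj : Disjoint S ({v, w} ∪ G.neighborSet v)) : S.ncard + 2 ≤ d := by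
  rw [Set.disjoint_union_right] at hdisj
  have hnadj {x : V} (hx : x ∈ S) (y : V) (hy : y ∈ ({v, w} : Set V)) : ¬ G.Adj x y := by
    rintro h
    refine Set.disjoint_left.1 hdisj.2 hx ?_
    rcases hy with rfl | rfl
    · exact h.symm
    · exact heq ▸ h.symm
  have hpair : ¬ G.Adj v w := fun h => G.irrefl (heq ▸ h : w ∈ G.neighborSet w)
  rw [← Set.ncard_pair hvw, ← Set.ncard_union_eq hdisj.1]
  exact hd _ (isIndepSet_union hS (isIndepSet_pair hpair) fun x hx => hnadj hx)

-- `I(G)` is the intersection of `I(G) + (A)` and `I(G) + (B)`, neither of which contains the other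
-- at the origin, so the connectedness bound applies.
theorem idealDepth_edgeIdeal_le_ringKrullDim_add_one {A B : Set V} (hA : A.Nonempty)
    (hB : B.Nonempty) (hAB : ∀ a ∈ A, ∀ b ∈ B, G.Adj a b) :
    (idealDepth (idealOfVars V k) (MvPolynomial V k ⧸ edgeIdeal k G) : WithBot ℕ∞) ≤
      ringKrullDim (MvPolynomial V k ⧸ (edgeIdeal k G ⊔ varIdeal k (A ∪ B))) + 1 := by
  obtain ⟨a, ha⟩ := hA
  obtain ⟨b, hb⟩ := hB
  have := idealOfVars_isPrime (V := V) (k := k)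
  have hle {x : V} {W : Set V} (hx : x ∉ W) :
      edgeIdeal k G ⊔ varIdeal k W ≤ varIdeal k {x}ᶜ :=
    sup_le (edgeIdeal_le_varIdeal (SimpleGraph.isVertexCover_compl.2 (Set.pairwise_singleton x _)))
      (varIdeal_le_varIdeal_iff.2 (Set.subset_compl_singleton_iff.2 hx))
  have hnle {x : V} {W : Set V} (hx : x ∈ W) :
      ¬ edgeIdeal k G ⊔ varIdeal k W ≤ varIdeal k {x}ᶜ := fun h =>
    varIdeal_le_varIdeal_iff.1 (le_sup_right.trans h) hx rfl
  have hdepth := idealDepth_quotient_inf_le_ringKrullDim_add_one (varIdeal_isPrime {b}ᶜ)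
    (varIdeal_isPrime {a}ᶜ) (varIdeal_le_idealOfVars _) (varIdeal_le_idealOfVars _)
    (hle fun hbA => (hAB b hbA b hb).ne rfl) (hnle hb) (hle fun haB => (hAB a ha a haB).ne rfl)
    (hnle ha)
  rwa [edgeIdeal_sup_varIdeal_inf_edgeIdeal_sup_varIdeal hAB, ← sup_sup_distrib_left,
    ← varIdeal_union] at hdepth

theorem idealDepth_edgeIdeal_lt_of_neighborSet_eq {v w u : V} {d : ℕ}
    (hd : ∀ S, G.IsIndepSet S → S.ncard ≤ d) (hvw : v ≠ w)
    (heq : G.neighborSet v = G.neighborSet w) (hvu : G.Adj v u) :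
    idealDepth (idealOfVars V k) (MvPolynomial V k ⧸ edgeIdeal k G) < d := by
  have hjoin : ∀ a ∈ ({v, w} : Set V), ∀ b ∈ G.neighborSet v, G.Adj a b := by
    rintro a (rfl | rfl) b hb
    · exact hb
    · rwa [heq] at hb
  have htwo : 2 ≤ d := by
    simpa using
      ncard_add_two_le_of_disjoint hd hvw heq (Set.pairwise_empty _) (Set.empty_disjoint _)
  have hdim : ringKrullDim (MvPolynomial V k ⧸
      (edgeIdeal k G ⊔ varIdeal k ({v, w} ∪ G.neighborSet v))) ≤ (d - 2 : ℕ) := by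
    refine ringKrullDim_quotient_edgeIdeal_sup_varIdeal_le fun S hS hdisj => ?_
    have := ncard_add_two_le_of_disjoint hd hvw heq hS hdisj
    lia
  have hdepth := (idealDepth_edgeIdeal_le_ringKrullDim_add_one (k := k) (Set.insert_nonempty v {w})
    ⟨u, hvu⟩ hjoin).trans (add_le_add_left hdim 1)
  norm_cast at hdepth
  lia

namespace IsCohenMacaulayGraph

theorem ncard_le_idealDepth (hG : IsCohenMacaulayGraph k G) {S : Set V} (hS : G.IsIndepSet S) :
    S.ncard ≤ idealDepth (idealOfVars V k) (MvPolynomial V k ⧸ edgeIdeal k G) := by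
  have hle := ncard_le_ringKrullDim_quotient_edgeIdeal (k := k) hS
  rw [IsCohenMacaulayGraph] at hG
  rw [hG] at hle
  exact_mod_cast hle

theorem ncard_compl_eq_idealDepth (hG : IsCohenMacaulayGraph k G) {C : Set V}
    (hC : Minimal G.IsVertexCover C) :
    Cᶜ.ncard = idealDepth (idealOfVars V k) (MvPolynomial V k ⧸ edgeIdeal k G) :=
  (hG.ncard_le_idealDepth (SimpleGraph.isIndepSet_compl_iff_isVertexCover.2 hC.1)).antisymm
    (idealDepth_edgeIdeal_le_ncard_compl hC)

theorem isVeryWellCovered (hG : IsCohenMacaulayGraph k G) (hiso : ∀ v, ∃ w, G.Adj v w)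
    (hcov : ∃ C, Minimal G.IsVertexCover C ∧ 2 * C.ncard = Nat.card V) :
    IsVeryWellCovered G := by
  obtain ⟨C₀, hC₀, hcard⟩ := hcov
  refine ⟨hiso, fun C hC => ?_⟩
  have heq := (hG.ncard_compl_eq_idealDepth hC).trans (hG.ncard_compl_eq_idealDepth hC₀).symm
  have := Set.ncard_add_ncard_compl C
  have := Set.ncard_add_ncard_compl C₀
  lia

theorem injective_neighborSet (hG : IsCohenMacaulayGraph k G) (hiso : ∀ v, ∃ w, G.Adj v w) :
    Function.Injective G.neighborSet := by
  refine fun v w heq => by_contra fun hvw => ?_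
  obtain ⟨u, hvu⟩ := hiso v
  exact (idealDepth_edgeIdeal_lt_of_neighborSet_eq (k := k)
    (fun _ hS => hG.ncard_le_idealDepth hS) hvw heq hvu).false

end IsCohenMacaulayGraph

namespace IsVeryWellCovered

theorem ringKrullDim_quotient_edgeIdeal (hG : IsVeryWellCovered G) {M : Set V}
    (hM : G.IsIndepSet M) (hcard : 2 * M.ncard = Nat.card V) :
    ringKrullDim (MvPolynomial V k ⧸ edgeIdeal k G) = M.ncard := by
  refine le_antisymm ?_ (ncard_le_ringKrullDim_quotient_edgeIdeal hM)
  have hle := ringKrullDim_quotient_edgeIdeal_sup_varIdeal_le (k := k) (Z := ∅) (d := M.ncard)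
    fun S hS _ => by
      have := hG.two_mul_ncard_le hS
      lia
  rwa [varIdeal, Set.image_empty, Ideal.span_empty, sup_bot_eq] at hle

theorem exists_isWeaklyRegular (hG : IsVeryWellCovered G)
    (htwin : Function.Injective G.neighborSet) {M : Set V} (hM : G.IsIndepSet M) :
    ∃ rs : List (MvPolynomial V k), rs.length = M.ncard ∧ (∀ r ∈ rs, r ∈ idealOfVars V k) ∧
      IsWeaklyRegular (MvPolynomial V k ⧸ edgeIdeal k G) rs := by
  obtain ⟨σ, hσ, hadj⟩ := hG.exists_involutive_adj
  obtain ⟨_, hle⟩ := hG.exists_partialOrder_adj_iff htwin hσ hadj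
  let l := M.toFinite.toFinset.toList
  have hmem {v : V} : v ∈ l ↔ v ∈ M := by simp [l]
  have hl : l.Pairwise fun u v => u ≠ v ∧ u ≠ σ v :=
    (Finset.nodup_toList _).imp_of_mem fun hu hv huv => ⟨huv, fun h =>
      not_adj_of_isIndepSet hM (hmem.1 hv) (hmem.1 hu) (h ▸ hadj _)⟩
  refine ⟨l.map fun v => X v + X (σ v), ?_, ?_, ?_⟩
  · rw [List.length_map, Finset.length_toList, Set.ncard_eq_toFinset_card M]
  · exact List.forall_mem_map.2 fun v _ =>
      add_mem (Ideal.subset_span ⟨v, rfl⟩) (Ideal.subset_span ⟨σ v, rfl⟩)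
  · have hreg := isWeaklyRegular_quotient_edgeIdeal_sup_varIdeal (k := k) (Z := ∅) hσ hle hl
      isLowerSet_empty (by simp)
    rwa [varIdeal, Set.image_empty, Ideal.span_empty, sup_bot_eq] at hreg

theorem isCohenMacaulayGraph (hG : IsVeryWellCovered G)
    (htwin : Function.Injective G.neighborSet) : IsCohenMacaulayGraph k G := by
  have hprime := idealOfVars_isPrime (V := V) (k := k)
  obtain ⟨M, -, hM⟩ := exists_maximal_ge_of_wellFoundedGT G.IsIndepSet ∅ (Set.pairwise_empty _)
  have hC := minimal_isVertexCover_compl_iff.2 hM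
  have hcard : 2 * M.ncard = Nat.card V := by
    have := hG.2 Mᶜ hC
    have := Set.ncard_add_ncard_compl M
    lia
  obtain ⟨rs, hlen, hrs, h⟩ := hG.exists_isWeaklyRegular (k := k) htwin hM.1
  rw [IsCohenMacaulayGraph, hG.ringKrullDim_quotient_edgeIdeal hM.1 hcard, ← hlen,
    idealDepth_eq_length_of_ringKrullDim_quotient_eq (varIdeal_mem_associatedPrimes hC)
      (varIdeal_le_idealOfVars _) hrs
      (isRegular_quotient_of_isWeaklyRegular edgeIdeal_le_idealOfVars hprime.ne_top hrs h)
      (by rw [ringKrullDim_quotient_varIdeal, compl_compl, hlen])]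

end IsVeryWellCovered

theorem cohenMacaulay_iff_twinFree_veryWellCovered_general (hiso : ∀ v, ∃ w, G.Adj v w)
    (hcov : ∃ C, Minimal G.IsVertexCover C ∧ 2 * C.ncard = Nat.card V) :
    IsCohenMacaulayGraph k G ↔ Function.Injective G.neighborSet ∧ IsVeryWellCovered G :=
  ⟨fun hG => ⟨hG.injective_neighborSet hiso, hG.isVeryWellCovered hiso hcov⟩,
    fun h => h.2.isCohenMacaulayGraph h.1⟩

end CohenMacaulay

section FinsetVertexCover

variable {m : ℕ} {G : SimpleGraph (Fin m)}

theorem isMinimalVertexCover_iff_minimal {C : Finset (Fin m)} :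
    IsMinimalVertexCover G C ↔ Minimal G.IsVertexCover (C : Set (Fin m)) := by
  have hcover (D : Finset (Fin m)) : IsVertexCover G D ↔ G.IsVertexCover (D : Set (Fin m)) := by
    simp [IsVertexCover, SimpleGraph.IsVertexCover]
  rw [IsMinimalVertexCover, minimal_subset_iff, hcover]
  refine and_congr_right fun _ => ⟨fun h D hD hDC => ?_, fun h D hDC hD => ?_⟩
  · lift D to Finset (Fin m) using D.toFinite
    rw [h D (by exact_mod_cast hDC) ((hcover D).2 hD)]
  · exact_mod_cast (h ((hcover D).1 hD) (by exact_mod_cast hDC)).symm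

theorem isVeryWellCovered_iff {n : ℕ} {G : SimpleGraph (Fin (2 * n))} :
    IsVeryWellCovered G ↔ (∀ v, ∃ w, G.Adj v w) ∧
      ∀ C : Finset (Fin (2 * n)), IsMinimalVertexCover G C → C.card = n := by
  refine and_congr_right fun _ => ⟨fun h C hC => ?_, fun h C hC => ?_⟩
  · simpa using h C (isMinimalVertexCover_iff_minimal.1 hC)
  · lift C to Finset (Fin (2 * n)) using C.toFinite
    simp [h C (isMinimalVertexCover_iff_minimal.2 hC)]

end FinsetVertexCover

/-- **Theorem (Cohen–Macaulay very well-covered graphs).** Let `G` be a simple graph on `2n`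
vertices, without isolated vertices, having a minimal vertex cover of `n` elements. Then `G`
is Cohen–Macaulay (i.e. `depth R/I(G) = dim R/I(G)`) if and only if `G` is a twin-free very
well-covered graph (no two distinct vertices have the same open neighborhood, there are no
isolated vertices, and every minimal vertex cover has exactly `n` elements). -/
theorem cohenMacaulay_iff_twinFree_veryWellCovered {k : Type*} [Field k] {n : ℕ}
    (G : SimpleGraph (Fin (2 * n)))
    (hniso : ∀ v : Fin (2 * n), ∃ w : Fin (2 * n), G.Adj v w)
    (hcov : ∃ C : Finset (Fin (2 * n)), IsMinimalVertexCover G C ∧ C.card = n) :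
    (ringKrullDim (MvPolynomial (Fin (2 * n)) k ⧸ edgeIdealG k G) =
        ((pdepth (edgeIdealG k G) : ℕ∞) : WithBot ℕ∞)) ↔
      ((∀ v w : Fin (2 * n), v ≠ w → G.neighborSet v ≠ G.neighborSet w) ∧
        (∀ v : Fin (2 * n), ∃ w : Fin (2 * n), G.Adj v w) ∧
        ∀ C : Finset (Fin (2 * n)), IsMinimalVertexCover G C → C.card = n) := by
  obtain ⟨C, hC, hcard⟩ := hcov
  have h := cohenMacaulay_iff_twinFree_veryWellCovered_general (k := k) hniso
    ⟨C, isMinimalVertexCover_iff_minimal.1 hC, by simp [hcard]⟩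
  rwa [isVeryWellCovered_iff, Function.injective_iff_pairwise_ne] at h
end

section
/- Let H be a simple hypergraph on vertex set V such that for every vertex x of H, the hypergraph H:x is a graph whose complement is chordal. Then reg H ≤ 3, i.e. reg I(H) ≤ 3. -/
open MvPolynomial

/-- The edge ideal `I(H)` of the hypergraph on vertices `x_1, …, x_n` with edge set `E`. -/
noncomputable def edgeIdealH (k : Type*) [Field k] {n : ℕ} (E : Set (Finset (Fin n))) :
    Ideal (MvPolynomial (Fin n) k) :=
  Ideal.span ((fun F => ∏ i ∈ F, MvPolynomial.X i) '' E)

/-- `F` is a good leaf of the hypergraph with edge set `E`: `F` is an edge and the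
intersections of `F` with the other edges form a chain with respect to containment. -/
def IsGoodLeaf {n : ℕ} (E : Set (Finset (Fin n))) (F : Finset (Fin n)) : Prop :=
  F ∈ E ∧ ∀ G₁ ∈ E, ∀ G₂ ∈ E, G₁ ≠ F → G₂ ≠ F → (G₁ ∩ F ⊆ G₂ ∩ F ∨ G₂ ∩ F ⊆ G₁ ∩ F)

/-- The hypergraph `H : x`: all minimal sets of the form `F ∖ {x}` with `F` an edge. -/
def colonHyper {n : ℕ} (E : Set (Finset (Fin n))) (x : Fin n) : Set (Finset (Fin n)) :=
  {G | (∃ F ∈ E, G = F.erase x) ∧ ∀ F ∈ E, F.erase x ⊆ G → F.erase x = G}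

/-- A graph is chordal if it has no induced cycle of length `≥ 4`. -/
def IsChordalGraph {V : Type*} (G : SimpleGraph V) : Prop :=
  ∀ m : ℕ, 4 ≤ m → ¬∃ f : ZMod m ↪ V, ∀ a b : ZMod m,
    G.Adj (f a) (f b) ↔ (a = b + 1 ∨ b = a + 1)

/-!
For a vertex `x`, the ideal `I(H)` is `J + x L`, where `J` is generated by the edges avoiding `x`
and `L = I(H : x)`. Since `J : x = J`, the intersection `J ∩ x L` is `x J`, so a Mayer–Vietoris
argument gives `reg I(H) ≤ max (reg J) (reg L + 1)`. Removing the vertices one at a time, only the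
colon ideals matter, and these have regularity at most `2` by Fröberg's theorem. The latter follows
from the same inequality: by Dirac's theorem the chordal complement has a simplicial vertex, whose
colon ideal is generated by variables.

Bounds on the regularity are witnessed by graded free resolutions, built one syzygy module at a time
with the horseshoe lemma.
-/

section GradedFreeModules

variable {R σ : Type*} [CommRing R] [SetLike σ R] [AddSubgroupClass σ R] (𝒜 : ℤ → σ)
  [GradedRing 𝒜] {ι ι' κ κ' : Type*} {D : ι → ℤ} {D' : ι' → ℤ} {C : κ → ℤ} {C' : κ' → ℤ}

/-- The component of degree `d` of a vector of the graded free module `⨁ i, R(-D i)`, whose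
`i`-th basis vector has degree `D i`. -/
def homogComponent (D : ι → ℤ) (d : ℤ) (w : ι → R) : ι → R :=
  fun i => GradedRing.proj 𝒜 (d - D i) (w i)

/-- A linear map of degree `0` from `⨁ i, R(-D i)` to `⨁ j, R(-D' j)`. -/
def IsGradedMap (D : ι → ℤ) (D' : ι' → ℤ) (φ : (ι → R) →ₗ[R] ι' → R) : Prop :=
  ∀ d w, φ (homogComponent 𝒜 D d w) = homogComponent 𝒜 D' d (φ w)

/-- A homogeneous submodule of the graded free module `⨁ i, R(-D i)`. -/
def IsHomogSubmodule (D : ι → ℤ) (N : Submodule R (ι → R)) : Prop :=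
  ∀ d, ∀ w ∈ N, homogComponent 𝒜 D d w ∈ N

variable {𝒜}

theorem homogComponent_zero (d : ℤ) : homogComponent 𝒜 D d 0 = 0 := by
  ext i
  simp [homogComponent]

theorem homogComponent_add (d : ℤ) (v w : ι → R) :
    homogComponent 𝒜 D d (v + w) = homogComponent 𝒜 D d v + homogComponent 𝒜 D d w := by
  ext i
  simp [homogComponent]

theorem homogComponent_add_const (e d : ℤ) (w : ι → R) :
    homogComponent 𝒜 (fun i => D i + e) d w = homogComponent 𝒜 D (d - e) w := by
  ext i
  rw [homogComponent, homogComponent, sub_sub, add_comm]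

theorem homogComponent_single_one [DecidableEq ι] (j : ι) :
    homogComponent 𝒜 D (D j) (Pi.single j 1) = Pi.single j 1 := by
  ext i
  obtain rfl | hij := eq_or_ne i j
  · simpa [homogComponent, GradedRing.proj_apply] using
      DirectSum.decompose_of_mem_same 𝒜 (SetLike.GradedOne.one_mem (A := 𝒜))
  · simp [homogComponent, hij]

theorem isGradedMap_iff [Finite ι] [DecidableEq ι] {φ : (ι → R) →ₗ[R] ι' → R} :
    IsGradedMap 𝒜 D D' φ ↔ ∀ i j, φ (Pi.single j 1) i ∈ 𝒜 (D j - D' i) := by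
  cases nonempty_fintype ι
  refine ⟨fun h i j => ?_, fun h d w => ?_⟩
  · rw [← homogComponent_single_one (𝒜 := 𝒜) (D := D) j, h]
    exact SetLike.coe_mem _
  · have expand (v : ι → R) (i : ι') : φ v i = ∑ j, v j * φ (Pi.single j 1) i := by
      conv_lhs => rw [pi_eq_sum_univ' v, map_sum]
      simp [smul_eq_mul, Finset.sum_apply]
    ext i
    rw [expand, homogComponent, expand, map_sum]
    refine Finset.sum_congr rfl fun j _ => ?_
    rw [GradedRing.proj_apply, show d - D' i = d - D j + (D j - D' i) by ring,
      DirectSum.coe_decompose_mul_add_of_right_mem 𝒜 (h i j)]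
    rfl

/-- The map `R^κ ⊕ R^κ' → R^ι` which is `φ` on the first summand and `ψ` on the second. -/
def sumCoprod (φ : (κ → R) →ₗ[R] ι → R) (ψ : (κ' → R) →ₗ[R] ι → R) :
    (κ ⊕ κ' → R) →ₗ[R] ι → R :=
  φ ∘ₗ LinearMap.funLeft R R Sum.inl + ψ ∘ₗ LinearMap.funLeft R R Sum.inr

theorem sumCoprod_sumElim (φ : (κ → R) →ₗ[R] ι → R) (ψ : (κ' → R) →ₗ[R] ι → R) (v : κ → R)
    (w : κ' → R) : sumCoprod φ ψ (Sum.elim v w) = φ v + ψ w := rfl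

theorem range_sumCoprod (φ : (κ → R) →ₗ[R] ι → R) (ψ : (κ' → R) →ₗ[R] ι → R) :
    (sumCoprod φ ψ).range = φ.range ⊔ ψ.range := by
  ext y
  simp only [Submodule.mem_sup, LinearMap.mem_range, exists_exists_eq_and]
  exact ⟨fun ⟨w, hw⟩ => ⟨w ∘ Sum.inl, w ∘ Sum.inr, hw⟩, fun ⟨v, w, h⟩ => ⟨Sum.elim v w, h⟩⟩

theorem map_funLeft_inr_ker_sumCoprod (φ : (κ → R) →ₗ[R] ι → R) (ψ : (κ' → R) →ₗ[R] ι → R) :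
    (sumCoprod φ ψ).ker.map (LinearMap.funLeft R R Sum.inr) = φ.range.comap ψ := by
  ext w
  simp only [Submodule.mem_map, LinearMap.mem_ker, Submodule.mem_comap, LinearMap.mem_range]
  constructor
  · rintro ⟨u, hu, rfl⟩
    exact ⟨-(u ∘ Sum.inl), by rw [map_neg]; exact neg_eq_of_add_eq_zero_right hu⟩
  · rintro ⟨v, hv⟩
    exact ⟨Sum.elim (-v) w, by rw [sumCoprod_sumElim, map_neg, hv, neg_add_cancel], rfl⟩

theorem ker_sumCoprod_inf_ker_funLeft_inr (φ : (κ → R) →ₗ[R] ι → R)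
    (ψ : (κ' → R) →ₗ[R] ι → R) :
    (sumCoprod φ ψ).ker ⊓ (LinearMap.funLeft R R Sum.inr).ker =
      φ.ker.map (Function.ExtendByZero.linearMap R Sum.inl) := by
  ext w
  simp only [Submodule.mem_inf, Submodule.mem_map, LinearMap.mem_ker]
  constructor
  · rintro ⟨hw, hinr⟩
    refine ⟨w ∘ Sum.inl, ?_, ?_⟩
    · have h : φ (w ∘ Sum.inl) + ψ (LinearMap.funLeft R R Sum.inr w) = 0 := hw
      rwa [hinr, map_zero, add_zero] at h
    · ext (i | j)
      · exact Sum.inl_injective.extend_apply _ _ i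
      · simpa using (congrFun hinr j).symm
  · rintro ⟨v, hv, rfl⟩
    have hinl : Function.ExtendByZero.linearMap R Sum.inl v = Sum.elim v (0 : κ' → R) := by
      ext (i | j) <;> simp [Sum.inl_injective.extend_apply]
    rw [hinl, sumCoprod_sumElim, hv, map_zero, add_zero]
    exact ⟨rfl, rfl⟩

namespace IsGradedMap

theorem id : IsGradedMap 𝒜 D D (LinearMap.id : (ι → R) →ₗ[R] ι → R) := fun _ _ => rfl

theorem comp {ψ : (ι' → R) →ₗ[R] κ → R} {φ : (ι → R) →ₗ[R] ι' → R} (hψ : IsGradedMap 𝒜 D' C ψ)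
    (hφ : IsGradedMap 𝒜 D D' φ) : IsGradedMap 𝒜 D C (ψ ∘ₗ φ) := fun d w => by
  rw [LinearMap.comp_apply, hφ, hψ, LinearMap.comp_apply]

theorem add_const {φ : (ι → R) →ₗ[R] ι' → R} (hφ : IsGradedMap 𝒜 D D' φ) (e : ℤ) :
    IsGradedMap 𝒜 (fun i => D i + e) (fun i => D' i + e) φ := fun d w => by
  rw [homogComponent_add_const, homogComponent_add_const, hφ]

theorem smul_id {a : R} {e : ℤ} (ha : a ∈ 𝒜 e) :
    IsGradedMap 𝒜 (fun i => D i + e) D (a • LinearMap.id : (ι → R) →ₗ[R] ι → R) := fun d w => by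
  ext i
  simp only [homogComponent, LinearMap.smul_apply, LinearMap.id_apply, Pi.smul_apply,
    smul_eq_mul, GradedRing.proj_apply]
  rw [show d - D i = e + (d - (D i + e)) by ring,
    DirectSum.coe_decompose_mul_add_of_left_mem 𝒜 ha]

theorem funLeft (f : κ → ι) : IsGradedMap 𝒜 D (D ∘ f) (LinearMap.funLeft R R f) := fun _ _ => rfl

theorem sumCoprod {φ : (κ → R) →ₗ[R] ι → R} {ψ : (κ' → R) →ₗ[R] ι → R}
    (hφ : IsGradedMap 𝒜 C D φ) (hψ : IsGradedMap 𝒜 C' D ψ) :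
    IsGradedMap 𝒜 (Sum.elim C C') D (sumCoprod φ ψ) := fun d w => by
  have hsum := congrArg₂ (· + ·) (hφ d (w ∘ Sum.inl)) (hψ d (w ∘ Sum.inr))
  rwa [← homogComponent_add] at hsum

theorem extendByZero_inl : IsGradedMap 𝒜 C (Sum.elim C C')
    (Function.ExtendByZero.linearMap R (Sum.inl : κ → κ ⊕ κ')) := fun d w => by
  ext (i | j) <;> simp [homogComponent, Sum.inl_injective.extend_apply]

theorem isHomogSubmodule_ker {φ : (ι → R) →ₗ[R] ι' → R} (hφ : IsGradedMap 𝒜 D D' φ) :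
    IsHomogSubmodule 𝒜 D φ.ker := fun d w hw => by
  rw [LinearMap.mem_ker, hφ, LinearMap.mem_ker.1 hw, homogComponent_zero]

theorem isHomogSubmodule_comap {φ : (ι → R) →ₗ[R] ι' → R} (hφ : IsGradedMap 𝒜 D D' φ)
    {N : Submodule R (ι' → R)} (hN : IsHomogSubmodule 𝒜 D' N) :
    IsHomogSubmodule 𝒜 D (N.comap φ) := fun d w hw => by
  rw [Submodule.mem_comap, hφ]
  exact hN d _ hw

theorem isHomogSubmodule_range {φ : (ι → R) →ₗ[R] ι' → R} (hφ : IsGradedMap 𝒜 D D' φ) :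
    IsHomogSubmodule 𝒜 D' φ.range := by
  rintro d _ ⟨w, rfl⟩
  exact ⟨_, hφ d w⟩

/-- Projectivity of graded free modules. -/
theorem exists_lift [Finite κ] {N : Submodule R (ι → R)} (hN : IsHomogSubmodule 𝒜 D N)
    {p : (ι → R) →ₗ[R] ι' → R} (hp : IsGradedMap 𝒜 D D' p)
    {φ : (κ → R) →ₗ[R] ι' → R} (hφ : IsGradedMap 𝒜 C D' φ) (hle : φ.range ≤ N.map p) :
    ∃ ψ : (κ → R) →ₗ[R] ι → R, IsGradedMap 𝒜 C D ψ ∧ p ∘ₗ ψ = φ ∧ ψ.range ≤ N := by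
  classical
  cases nonempty_fintype κ
  have lift_basis (j : κ) : ∃ w ∈ N, p w = φ (Pi.single j 1) ∧ ∀ i, w i ∈ 𝒜 (C j - D i) := by
    obtain ⟨w, hwN, hw⟩ := hle ⟨Pi.single j 1, rfl⟩
    refine ⟨homogComponent 𝒜 D (C j) w, hN _ _ hwN, ?_, fun i => SetLike.coe_mem _⟩
    rw [hp, hw, ← hφ, homogComponent_single_one]
  choose w hwN hw hdeg using lift_basis
  refine ⟨Fintype.linearCombination R w, isGradedMap_iff.2 fun i j => ?_, ?_, ?_⟩
  · rw [Fintype.linearCombination_apply_single, one_smul]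
    exact hdeg j i
  · refine LinearMap.pi_ext' fun j => LinearMap.ext_ring ?_
    simp [Fintype.linearCombination_apply_single, hw]
  · rw [Fintype.range_linearCombination, Submodule.span_le]
    rintro _ ⟨j, rfl⟩
    exact hwN j

end IsGradedMap

end GradedFreeModules

section BoundedResolutions

variable {R σ : Type*} [CommRing R] [SetLike σ R] [AddSubgroupClass σ R] (𝒜 : ℤ → σ)
  [GradedRing 𝒜]

/-- The submodule `N` of the graded free module `⨁ i, R(-D i)` has a graded free resolution
`0 → F_{l-1} → ⋯ → F₁ → F₀ → N → 0` of length at most `l` by modules of finite rank in which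
every basis vector of `Fᵢ` has degree at most `r + i`. The resolution is encoded by successive
covers: `F₀` maps onto `N`, and the kernel is resolved in turn. -/
def HasBoundedRes : ℕ → ∀ {ι : Type}, (ι → ℤ) → Submodule R (ι → R) → ℤ → Prop
  | 0, _, _, N, _ => N = ⊥
  | l + 1, ι, D, N, r => ∃ (κ : Type) (_ : Finite κ) (C : κ → ℤ) (φ : (κ → R) →ₗ[R] ι → R),
      (∀ j, C j ≤ r) ∧ IsGradedMap 𝒜 C D φ ∧ φ.range = N ∧ HasBoundedRes l C φ.ker (r + 1)

namespace HasBoundedRes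

variable {𝒜} {ι ι' κ κ' : Type} {D : ι → ℤ} {D' : ι' → ℤ} {C : κ → ℤ} {C' : κ' → ℤ}
  {N N₁ N₂ : Submodule R (ι → R)} {l l' : ℕ} {r r' : ℤ}

theorem bot : HasBoundedRes 𝒜 l D ⊥ r := by
  induction l generalizing ι r with
  | zero => rfl
  | succ l ih =>
    refine ⟨Empty, inferInstance, Empty.elim, 0, Empty.rec, fun d w => ?_, LinearMap.range_zero, ?_⟩
    · simp [homogComponent_zero]
    · rw [Subsingleton.elim (LinearMap.ker _) ⊥]
      exact ih

theorem mono (h : HasBoundedRes 𝒜 l D N r) (hl : l ≤ l') (hr : r ≤ r') :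
    HasBoundedRes 𝒜 l' D N r' := by
  induction l generalizing ι l' r r' with
  | zero =>
    obtain rfl : N = ⊥ := h
    exact bot
  | succ l ih =>
    obtain ⟨κ, hκ, C, φ, hC, hφ, hN, hker⟩ := h
    obtain ⟨l', rfl⟩ := Nat.exists_eq_succ_of_ne_zero (Nat.ne_zero_of_lt hl)
    exact ⟨κ, hκ, C, φ, fun j => (hC j).trans hr, hφ, hN,
      ih hker (Nat.le_of_succ_le_succ hl) (by gcongr)⟩

theorem add_const (h : HasBoundedRes 𝒜 l D N r) (e : ℤ) :
    HasBoundedRes 𝒜 l (fun i => D i + e) N (r + e) := by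
  induction l generalizing ι r with
  | zero => exact h
  | succ l ih =>
    obtain ⟨κ, hκ, C, φ, hC, hφ, hN, hker⟩ := h
    refine ⟨κ, hκ, fun j => C j + e, φ, fun j => by grind, hφ.add_const e, hN, ?_⟩
    rw [add_right_comm]
    exact ih hker

theorem map (h : HasBoundedRes 𝒜 l D N r) {θ : (ι → R) →ₗ[R] ι' → R} (hθ : IsGradedMap 𝒜 D D' θ)
    (hinj : Function.Injective θ) : HasBoundedRes 𝒜 l D' (N.map θ) r := by
  cases l with
  | zero =>
    obtain rfl : N = ⊥ := h
    exact Submodule.map_bot θ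
  | succ l =>
    obtain ⟨κ, hκ, C, φ, hC, hφ, rfl, hker⟩ := h
    refine ⟨κ, hκ, C, θ ∘ₗ φ, hC, hθ.comp hφ, LinearMap.range_comp φ θ, ?_⟩
    rwa [LinearMap.ker_comp_of_ker_eq_bot φ (LinearMap.ker_eq_bot.2 hinj)]

theorem extendByZero_inl (h : HasBoundedRes 𝒜 l D N r) : HasBoundedRes 𝒜 l (Sum.elim D D')
    (N.map (Function.ExtendByZero.linearMap R (Sum.inl : ι → ι ⊕ ι'))) r :=
  h.map .extendByZero_inl (Function.extend_injective Sum.inl_injective (0 : ι ⊕ ι' → R))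

/-- The horseshoe lemma for `0 → N ⊓ ker p → N → p N → 0`. -/
theorem of_inf_ker_of_map (hN : IsHomogSubmodule 𝒜 D N) {p : (ι → R) →ₗ[R] ι' → R}
    (hp : IsGradedMap 𝒜 D D' p) (hker : HasBoundedRes 𝒜 l D (N ⊓ p.ker) r)
    (hmap : HasBoundedRes 𝒜 l D' (N.map p) r) : HasBoundedRes 𝒜 l D N r := by
  induction l generalizing ι ι' r with
  | zero =>
    have hle : N ≤ N ⊓ p.ker := le_inf le_rfl (LinearMap.le_ker_iff_map.2 hmap)
    exact le_bot_iff.1 (hle.trans_eq hker)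
  | succ l ih =>
    obtain ⟨κ, _, C, φ, hC, hφ, hrange, hkerφ⟩ := hker
    obtain ⟨κ', _, C', φ', hC', hφ', hrange', hkerφ'⟩ := hmap
    obtain ⟨ψ, hψ, rfl, hψN⟩ := hp.exists_lift hN hφ' hrange'.le
    refine ⟨κ ⊕ κ', inferInstance, Sum.elim C C', sumCoprod φ ψ, by simp [hC, hC'],
      hφ.sumCoprod hψ, ?_, ?_⟩
    · rw [range_sumCoprod, hrange]
      refine le_antisymm (sup_le inf_le_left hψN) fun w hw => ?_
      obtain ⟨v, hv⟩ : p w ∈ (p ∘ₗ ψ).range := hrange' ▸ Submodule.mem_map_of_mem hw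
      refine Submodule.mem_sup.2
        ⟨w - ψ v, ⟨N.sub_mem hw (hψN ⟨v, rfl⟩), ?_⟩, ψ v, ⟨v, rfl⟩, sub_add_cancel w _⟩
      simp [← hv]
    · refine ih (hφ.sumCoprod hψ).isHomogSubmodule_ker (.funLeft Sum.inr) ?_ ?_
      · rw [ker_sumCoprod_inf_ker_funLeft_inr]
        exact hkerφ.extendByZero_inl
      · rw [map_funLeft_inr_ker_sumCoprod, hrange]
        rwa [Submodule.comap_inf, LinearMap.range_le_iff_comap.1 hψN, top_inf_eq,
          ← LinearMap.ker_comp]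

theorem ker_sumCoprod {φ : (κ → R) →ₗ[R] ι → R} {ψ : (κ' → R) →ₗ[R] ι → R}
    (hφ : IsGradedMap 𝒜 C D φ) (hψ : IsGradedMap 𝒜 C' D ψ) (hker : HasBoundedRes 𝒜 l C φ.ker r)
    (hcomap : HasBoundedRes 𝒜 l C' (φ.range.comap ψ) r) :
    HasBoundedRes 𝒜 l (Sum.elim C C') (sumCoprod φ ψ).ker r := by
  refine of_inf_ker_of_map (hφ.sumCoprod hψ).isHomogSubmodule_ker (.funLeft Sum.inr) ?_ ?_
  · rw [ker_sumCoprod_inf_ker_funLeft_inr]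
    exact hker.extendByZero_inl
  · rwa [map_funLeft_inr_ker_sumCoprod]

/-- Mayer–Vietoris for `0 → N₁ ⊓ N₂ → N₁ ⊕ N₂ → N₁ ⊔ N₂ → 0`. -/
theorem sup (h₁ : HasBoundedRes 𝒜 (l + 1) D N₁ r) (h₂ : HasBoundedRes 𝒜 (l + 1) D N₂ r)
    (hinf : HasBoundedRes 𝒜 l D (N₁ ⊓ N₂) (r + 1)) : HasBoundedRes 𝒜 (l + 1) D (N₁ ⊔ N₂) r := by
  obtain ⟨κ, _, C, φ, hC, hφ, rfl, hker⟩ := h₁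
  obtain ⟨κ', _, C', φ', hC', hφ', rfl, hker'⟩ := h₂
  refine ⟨κ ⊕ κ', inferInstance, Sum.elim C C', sumCoprod φ φ', by simp [hC, hC'],
    hφ.sumCoprod hφ', range_sumCoprod φ φ', ker_sumCoprod hφ hφ' hker ?_⟩
  refine of_inf_ker_of_map (hφ'.isHomogSubmodule_comap hφ.isHomogSubmodule_range) hφ' ?_ ?_
  · rwa [inf_eq_right.2 (LinearMap.ker_le_comap φ')]
  · rwa [Submodule.map_comap_eq, inf_comm]

theorem exists_cover_fin (h : HasBoundedRes 𝒜 (l + 1) D N r) :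
    ∃ (m : ℕ) (C : Fin m → ℤ) (φ : (Fin m → R) →ₗ[R] ι → R), (∀ j, C j ≤ r) ∧
      IsGradedMap 𝒜 C D φ ∧ φ.range = N ∧ HasBoundedRes 𝒜 l C φ.ker (r + 1) := by
  obtain ⟨κ, _, C, φ, hC, hφ, hN, hker⟩ := h
  obtain ⟨m, ⟨e⟩⟩ := Finite.exists_equiv_fin κ
  let reindex := LinearEquiv.funCongrLeft R R e
  have hreindex : IsGradedMap 𝒜 (C ∘ e.symm) ((C ∘ e.symm) ∘ e) reindex.toLinearMap := .funLeft e
  rw [Function.comp_assoc, e.symm_comp_self, Function.comp_id] at hreindex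
  refine ⟨m, C ∘ e.symm, φ ∘ₗ reindex, fun j => hC _, hφ.comp hreindex, ?_, ?_⟩
  · rwa [LinearEquiv.range_comp]
  · rw [LinearMap.ker_comp, Submodule.comap_equiv_eq_map_symm]
    exact hker.map (.funLeft e.symm) reindex.symm.injective

theorem exists_resolution {m : ℕ} {D : Fin m → ℤ} {N : Submodule R (Fin m → R)}
    (h : HasBoundedRes 𝒜 l D N r) :
    ∃ (b : ℕ → ℕ) (C : ∀ i, Fin (b i) → ℤ) (ε : (Fin (b 0) → R) →ₗ[R] Fin m → R)
      (A : ∀ i, (Fin (b (i + 1)) → R) →ₗ[R] Fin (b i) → R),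
      (∀ i, l ≤ i → b i = 0) ∧ (∀ i j, C i j ≤ r + i) ∧
      IsGradedMap 𝒜 (C 0) D ε ∧ (∀ i, IsGradedMap 𝒜 (C (i + 1)) (C i) (A i)) ∧
      ε.range = N ∧ Function.Exact (A 0) ε ∧ ∀ i, Function.Exact (A (i + 1)) (A i) := by
  induction l generalizing m r with
  | zero =>
    obtain rfl : N = ⊥ := h
    exact ⟨fun _ => 0, fun _ => Fin.elim0, 0, fun _ => 0, fun _ _ => rfl, fun _ => Fin.rec0,
      fun _ _ => by simp [homogComponent_zero], fun _ _ _ => Subsingleton.elim _ _,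
      LinearMap.range_zero, fun w => by simp [Subsingleton.elim w 0],
      fun _ w => by simp [Subsingleton.elim w 0]⟩
  | succ l ih =>
    obtain ⟨m₀, C₀, φ, hC₀, hφ, hN, hker⟩ := h.exists_cover_fin
    obtain ⟨b, C, ε, A, hb, hC, hε, hA, hrange, hex₀, hex⟩ := ih hker
    let b' : ℕ → ℕ
      | 0 => m₀
      | i + 1 => b i
    let C' : ∀ i, Fin (b' i) → ℤ
      | 0 => C₀
      | i + 1 => C i
    let A' : ∀ i, (Fin (b' (i + 1)) → R) →ₗ[R] Fin (b' i) → R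
      | 0 => ε
      | i + 1 => A i
    refine ⟨b', C', φ, A', ?_, ?_, hφ, ?_, hN, LinearMap.exact_iff.2 hrange.symm, ?_⟩
    · rintro (_ | i) hi
      exacts [absurd hi (by simp), hb i (Nat.le_of_succ_le_succ hi)]
    · rintro (_ | i) j
      · simpa using hC₀ j
      · exact (hC i j).trans_eq (by push_cast; ring)
    · rintro (_ | i)
      exacts [hε, hA i]
    · rintro (_ | i)
      exacts [hex₀, hex i]

end HasBoundedRes

/-- The ideal `I` has a finite graded free resolution `⋯ → F₁ → F₀ → I → 0` in which every basis
vector of `Fᵢ` has degree at most `r + i`; that is, `reg I ≤ r`. The ideal is regarded as a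
submodule of `R¹ = (Fin 1 → R)`. -/
def RegLE (I : Ideal R) (r : ℤ) : Prop :=
  ∃ l, HasBoundedRes 𝒜 l (0 : Fin 1 → ℤ)
    (Submodule.map (LinearEquiv.funUnique (Fin 1) R R).symm.toLinearMap I) r

namespace RegLE

variable {𝒜} {I J L : Ideal R} {a : R} {e r : ℤ}

theorem bot : RegLE 𝒜 (⊥ : Ideal R) r :=
  ⟨0, Submodule.map_bot _⟩

theorem top (hr : 0 ≤ r) : RegLE 𝒜 (⊤ : Ideal R) r := by
  refine ⟨1, Fin 1, inferInstance, 0, LinearMap.id, fun _ => hr, .id, ?_, LinearMap.ker_id⟩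
  rw [Submodule.map_top, LinearMap.range_id, LinearEquiv.range]

theorem span_singleton_mul (ha : a ∈ 𝒜 e) (ha₀ : a ∈ nonZeroDivisors R) (h : RegLE 𝒜 L r) :
    RegLE 𝒜 (Ideal.span {a} * L) (r + e) := by
  obtain ⟨l, h⟩ := h
  refine ⟨l, ?_⟩
  convert (h.add_const e).map (IsGradedMap.smul_id ha) ?_ using 1
  · rw [← Submodule.map_comp]
    ext w
    rw [Submodule.mem_map_equiv, Ideal.mem_span_singleton_mul, Submodule.mem_map]
    refine exists_congr fun b => and_congr_right fun _ => ?_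
    exact ⟨fun h => funext fun i => by rw [Subsingleton.elim i 0]; exact h, fun h => h ▸ rfl⟩
  · intro v w hvw
    ext i
    exact mul_cancel_left_mem_nonZeroDivisors ha₀ |>.1 (congrFun hvw i)

/-- Since `J : a = J`, the intersection `J ⊓ aL` is `aJ`, and Mayer–Vietoris applies. -/
theorem sup_span_singleton_mul (ha : a ∈ 𝒜 1) (ha₀ : a ∈ nonZeroDivisors R) (hle : J ≤ L)
    (hcolon : ∀ b, a * b ∈ J → b ∈ J) (hJ : RegLE 𝒜 J r) (hL : RegLE 𝒜 L (r - 1)) :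
    RegLE 𝒜 (J ⊔ Ideal.span {a} * L) r := by
  have hinf : J ⊓ Ideal.span {a} * L = Ideal.span {a} * J := by
    refine le_antisymm ?_ (le_inf Ideal.mul_le_right (Ideal.mul_mono_right hle))
    rintro c ⟨hcJ, hcL⟩
    obtain ⟨b, -, rfl⟩ := Ideal.mem_span_singleton_mul.1 hcL
    exact Ideal.mem_span_singleton_mul.2 ⟨b, hcolon b hcJ, rfl⟩
  obtain ⟨l₁, haJ⟩ := hJ.span_singleton_mul ha ha₀
  obtain ⟨l₂, haL⟩ := hL.span_singleton_mul ha ha₀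
  obtain ⟨l₃, hJ⟩ := hJ
  refine ⟨l₁ + l₂ + l₃ + 1, ?_⟩
  rw [Submodule.map_sup]
  refine (hJ.mono (by lia) le_rfl).sup (haL.mono (by lia) (by lia)) ?_
  rw [← Submodule.map_inf _ (LinearEquiv.injective _), hinf]
  exact haJ.mono (by lia) le_rfl

end RegLE

end BoundedResolutions

section PolynomialRing

variable {k : Type*} [Field k] {n : ℕ}

/-- The standard grading of `k[x₁, …, xₙ]`, indexed by `ℤ`. -/
noncomputable abbrev zGrading (k : Type*) [Field k] (n : ℕ) :
    ℤ → Submodule k (MvPolynomial (Fin n) k) :=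
  weightedHomogeneousSubmodule k (fun _ => 1)

noncomputable instance : GradedRing (zGrading k n) :=
  weightedGradedAlgebra k _

theorem homogOfDeg_of_mem_zGrading {p : MvPolynomial (Fin n) k} {d : ℤ}
    (hp : p ∈ zGrading k n d) : HomogOfDeg p d := by
  refine or_iff_not_imp_left.2 fun hp₀ => ?_
  have degree_eq (m) (hm : coeff m p ≠ 0) : (m.degree : ℤ) = d := by
    rw [← hp hm, Finsupp.weight_apply, Finsupp.sum, Finsupp.degree_apply]
    simp
  obtain ⟨m, hm⟩ := ne_zero_iff.1 hp₀
  refine ⟨m.degree, degree_eq m hm, fun m' hm' => ?_⟩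
  rw [Pi.one_def, ← Finsupp.degree_eq_weight_one]
  exact_mod_cast (degree_eq m' hm').trans (degree_eq m hm).symm

theorem IsGradedMap.homogOfDeg_toMatrix' {ι ι' : Type*} [Fintype ι] [DecidableEq ι] {D : ι → ℤ}
    {D' : ι' → ℤ} {φ : (ι → MvPolynomial (Fin n) k) →ₗ[MvPolynomial (Fin n) k]
      ι' → MvPolynomial (Fin n) k} (hφ : IsGradedMap (zGrading k n) D D' φ) (i : ι') (j : ι) :
    HomogOfDeg (LinearMap.toMatrix' φ i j) (D j - D' i) := by
  rw [LinearMap.toMatrix'_apply]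
  exact homogOfDeg_of_mem_zGrading (isGradedMap_iff.1 hφ i j)

theorem RegLE.exists_gradedFreeRes {I : Ideal (MvPolynomial (Fin n) k)} {r : ℤ} (hr : 0 ≤ r)
    (h : RegLE (zGrading k n) I (r + 1)) :
    ∃ F : GradedFreeRes I, ∀ (i : ℕ) (j : Fin (F.b i)), F.D i j - i ≤ r := by
  obtain ⟨l, h⟩ := h
  obtain ⟨b, C, ε, A, hb, hC, hε, hA, hrange, hex₀, hex⟩ := h.exists_resolution
  let b' : ℕ → ℕ
    | 0 => 1
    | i + 1 => b i
  let C' : ∀ i, Fin (b' i) → ℤ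
    | 0 => 0
    | i + 1 => C i
  let A' : ∀ i, (Fin (b' (i + 1)) → MvPolynomial (Fin n) k) →ₗ[MvPolynomial (Fin n) k]
      Fin (b' i) → MvPolynomial (Fin n) k
    | 0 => ε
    | i + 1 => A i
  have hA' : ∀ i, IsGradedMap (zGrading k n) (C' (i + 1)) (C' i) (A' i)
    | 0 => hε
    | i + 1 => hA i
  have hmulVec (i) : (LinearMap.toMatrix' (A' i)).mulVec = A' i :=
    funext fun w => LinearMap.toMatrix'_mulVec _ w
  refine ⟨⟨l, b', ?_, C', fun i => LinearMap.toMatrix' (A' i), 1, ?_,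
    fun i => (hA' i).homogOfDeg_toMatrix', ?_, ?_, ?_⟩, ?_⟩
  · rintro (_ | i) hi
    exacts [absurd hi (by simp), hb i (Nat.le_of_lt_succ hi)]
  · exact fun _ => .inr ⟨0, rfl, isHomogeneous_one _ _⟩
  · intro q
    obtain ⟨f, rfl⟩ := Ideal.Quotient.mk_surjective q
    exact ⟨fun _ => f, by simp [b']⟩
  · intro w
    have hw : w ∈ ε.range ↔ w 0 ∈ I := by
      rw [hrange]
      exact Submodule.mem_map_equiv _
    simpa [b', hmulVec, Ideal.Quotient.eq_zero_iff_mem] using hw.symm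
  · intro i
    rw [hmulVec, hmulVec (i + 1)]
    cases i with
    | zero => exact hex₀
    | succ i => exact hex i
  · rintro (_ | i) j
    · simpa [C'] using hr
    · have := hC i j
      push_cast
      lia

theorem RegLE.regIdeal_le {I : Ideal (MvPolynomial (Fin n) k)} {r : ℤ} (hr : 1 ≤ r)
    (h : RegLE (zGrading k n) I r) : regIdeal I ≤ r := by
  have hmem := RegLE.exists_gradedFreeRes (r := r - 1) (by lia) (by simpa using h)
  rw [regIdeal, ← le_sub_iff_add_le]
  by_cases hbdd : BddBelow {r : ℤ | ∃ F : GradedFreeRes I,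
      ∀ (i : ℕ) (j : Fin (F.b i)), F.D i j - (i : ℤ) ≤ r}
  · exact csInf_le hbdd hmem
  · -- `sInf` of a set of integers which is unbounded below is `0` by convention
    rw [regQuot, Int.csInf_of_not_bddBelow hbdd]
    lia

end PolynomialRing

section ChordalGraphs

open SimpleGraph

variable {V : Type*} {G : SimpleGraph V} {s t c v : V}

theorem exists_pathGraph_embedding (hG : G.Connected) (s t : V) :
    ∃ f : pathGraph (G.dist s t + 1) ↪g G, f 0 = s ∧ f (Fin.last _) = t := by
  obtain ⟨p, hp⟩ := hG.exists_walk_length_eq_dist s t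
  have dist_getVert {i : ℕ} (hi : i ≤ G.dist s t) : G.dist s (p.getVert i) = i := by
    rw [← length_eq_dist_of_subwalk hp (p.isSubwalk_take i), Walk.take_length, hp,
      min_eq_left hi]
  have adj_iff (i j : Fin (G.dist s t + 1)) :
      G.Adj (p.getVert i) (p.getVert j) ↔ i.val + 1 = j ∨ j.val + 1 = i := by
    refine ⟨fun hadj => ?_, ?_⟩
    · have hne : i.val ≠ j.val := fun h => hadj.ne (congrArg p.getVert h)
      have := Adj.diff_dist_adj (u := s) hadj
      rw [dist_getVert i.is_le, dist_getVert j.is_le] at this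
      lia
    · rintro (h | h)
      · exact h ▸ p.adj_getVert_succ (by lia)
      · exact h ▸ (p.adj_getVert_succ (by lia)).symm
  refine ⟨⟨⟨fun i => p.getVert i, fun i j hij => ?_⟩, ?_⟩, p.getVert_zero, ?_⟩
  · have := congrArg (G.dist s) hij
    rwa [dist_getVert i.is_le, dist_getVert j.is_le, Fin.val_inj] at this
  · intro i j
    exact (adj_iff i j).trans pathGraph_adj.symm
  · change p.getVert (G.dist s t) = t
    rw [← hp, p.getVert_length]

theorem connected_induce_insert {A : Set V} (hA : (G.induce A).Connected)
    (hv : ∃ a ∈ A, G.Adj v a) : (G.induce (insert v A)).Connected := by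
  obtain ⟨a, ha, hva⟩ := hv
  have hv : (G.induce {v}).Preconnected := .of_subsingleton
  exact connected_induce_union hv hA.preconnected rfl ha hva

/-- Take `A` maximal among the connected subsets with a nonempty set `C` of non-neighbours. -/
theorem exists_connected_separated {W : Finset V} (hv : v ∈ W) (hc : c ∈ W) (hcv : c ≠ v)
    (hnadj : ¬G.Adj c v) :
    ∃ A ⊆ W, ∃ C ⊆ W, (G.induce (A : Set V)).Connected ∧ C.Nonempty ∧
      (∀ c ∈ C, c ∉ A ∧ ∀ a ∈ A, ¬G.Adj c a) ∧
      ∀ s ∈ W, s ∉ A → s ∉ C → (∃ a ∈ A, G.Adj s a) ∧ ∀ c ∈ C, G.Adj c s := by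
  classical
  let C (A : Finset V) : Finset V := {c ∈ W | c ∉ A ∧ ∀ a ∈ A, ¬G.Adj c a}
  have mem_C {A : Finset V} {c : V} : c ∈ C A ↔ c ∈ W ∧ c ∉ A ∧ ∀ a ∈ A, ¬G.Adj c a :=
    Finset.mem_filter
  let S : Set (Finset V) := {A | A ⊆ W ∧ (G.induce (A : Set V)).Connected ∧ (C A).Nonempty}
  have hS : S.Finite := W.powerset.finite_toSet.subset fun A hA => Finset.mem_powerset.2 hA.1
  have hvS : {v} ∈ S := by
    refine ⟨by simpa using hv, ?_, c, mem_C.2 ⟨hc, by simpa using hcv, by simpa using hnadj⟩⟩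
    rw [Finset.coe_singleton]
    exact .of_subsingleton
  obtain ⟨A, ⟨hAW, hA, hCA⟩, hmax⟩ := hS.exists_maximal ⟨_, hvS⟩
  refine ⟨A, hAW, C A, Finset.filter_subset _ _, hA, hCA, fun c h => (mem_C.1 h).2,
    fun s hsW hsA hsC => ?_⟩
  have hs : ∃ a ∈ A, G.Adj s a := by
    by_contra! h
    exact hsC (mem_C.2 ⟨hsW, hsA, h⟩)
  refine ⟨hs, fun c hcC => ?_⟩
  by_contra hcs
  obtain ⟨hcW, hcA, hcA'⟩ := mem_C.1 hcC
  have hcC' : c ∈ C (insert s A) := by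
    refine mem_C.2 ⟨hcW, ?_, Finset.forall_mem_insert .. |>.2 ⟨hcs, hcA'⟩⟩
    exact Finset.mem_insert.not.2 (not_or.2 ⟨fun h => hsC (h ▸ hcC), hcA⟩)
  have hsS : insert s A ∈ S := by
    refine ⟨Finset.insert_subset hsW hAW, ?_, c, hcC'⟩
    rw [Finset.coe_insert]
    exact connected_induce_insert hA hs
  exact hsA (hmax hsS (Finset.subset_insert s A) (Finset.mem_insert_self s A))

namespace IsChordalGraph

/-- Otherwise the path and `c` form an induced cycle of length `L + 2`. -/
theorem false_of_pathGraph_embedding (hG : IsChordalGraph G) {L : ℕ} (hL : 2 ≤ L)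
    (f : pathGraph (L + 1) ↪g G) (hc : ∀ i, c ≠ f i)
    (hadj : ∀ i, G.Adj c (f i) ↔ i = 0 ∨ i = Fin.last L) : False := by
  have eq_add_one_iff (a b : Fin (L + 2)) :
      a = b + 1 ↔ a.val = b.val + 1 ∨ a.val = 0 ∧ b.val = L + 1 := by
    rw [Fin.ext_iff, Fin.val_add_one]
    split_ifs with h <;> grind
  refine hG (L + 2) (by lia) ⟨⟨(Fin.snoc f c : Fin (L + 2) → V), ?_⟩, ?_⟩
  · exact Fin.snoc_injective_iff.2 ⟨f.injective, fun ⟨i, hi⟩ => hc i hi.symm⟩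
  · -- `ZMod (L + 2)` unfolds to `Fin (L + 2)`
    change ∀ a b : Fin (L + 2), G.Adj ((Fin.snoc f c : Fin (L + 2) → V) a)
      ((Fin.snoc f c : Fin (L + 2) → V) b) ↔ a = b + 1 ∨ b = a + 1
    simp only [eq_add_one_iff]
    intro a b
    cases a using Fin.lastCases <;> cases b using Fin.lastCases
    · simp
    · rw [Fin.snoc_last, Fin.snoc_castSucc, hadj]
      simp only [Fin.ext_iff, Fin.val_last, Fin.val_castSucc, Fin.val_zero]
      lia
    · rw [Fin.snoc_last, Fin.snoc_castSucc, G.adj_comm, hadj]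
      simp only [Fin.ext_iff, Fin.val_last, Fin.val_castSucc, Fin.val_zero]
      lia
    · simp [pathGraph_adj]
      lia

theorem adj_of_common_neighbor (hG : IsChordalGraph G) {A : Set V} (hA : (G.induce A).Connected)
    (hcA : c ∉ A) (hc : ∀ a ∈ A, ¬G.Adj c a) (hst : s ≠ t) (hcs : G.Adj c s) (hct : G.Adj c t)
    (hs : ∃ a ∈ A, G.Adj s a) (ht : ∃ a ∈ A, G.Adj t a) : G.Adj s t := by
  by_contra hnadj
  let S := insert s (insert t A)
  have hS : (G.induce S).Connected := by
    refine connected_induce_insert (connected_induce_insert hA ht) ?_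
    exact hs.imp fun a ha => ⟨.inr ha.1, ha.2⟩
  let s' : S := ⟨s, .inl rfl⟩
  let t' : S := ⟨t, .inr (.inl rfl)⟩
  obtain ⟨f, hf₀, hfL⟩ := exists_pathGraph_embedding hS s' t'
  have hL : 2 ≤ (G.induce S).dist s' t' :=
    hS.one_lt_dist_of_ne_of_not_adj (Subtype.coe_ne_coe.1 hst) hnadj
  have hcS : ∀ x ∈ S, c ≠ x ∧ (G.Adj c x ↔ x = s ∨ x = t) := by
    rintro x (rfl | rfl | hx)
    · exact ⟨hcs.ne, by simp [hcs]⟩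
    · exact ⟨hct.ne, by simp [hct]⟩
    · exact ⟨fun h => hcA (h ▸ hx), iff_of_false (hc x hx) <| by
        rintro (rfl | rfl)
        exacts [hc _ hx hcs, hc _ hx hct]⟩
  refine hG.false_of_pathGraph_embedding hL (f.trans (Embedding.induce S))
    (fun i => (hcS _ (f i).2).1) fun i => ?_
  rw [← f.injective.eq_iff, hf₀, ← f.injective.eq_iff, hfL, Subtype.ext_iff, Subtype.ext_iff]
  exact (hcS _ (f i).2).2

/-- Dirac's theorem: a simplicial vertex of `C`, where `W` is separated into `A` and `C` with `A`
maximal, is simplicial in `W`. -/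
theorem exists_isClique_neighbors (hG : IsChordalGraph G) {W : Finset V} (hW : W.Nonempty) :
    ∃ w ∈ W, G.IsClique {a | a ∈ W ∧ G.Adj w a} := by
  classical
  induction W using Finset.strongInduction with | H W ih
  by_cases hclique : ∃ v ∈ W, ∃ c ∈ W, c ≠ v ∧ ¬G.Adj c v
  · obtain ⟨v, hv, c, hc, hcv, hnadj⟩ := hclique
    obtain ⟨A, hAW, C, hCW, hA, hC, hsep, hadj⟩ := exists_connected_separated hv hc hcv hnadj
    obtain ⟨a, ha⟩ := hA.nonempty
    obtain ⟨w, hwC, hw⟩ := ih C (hCW.ssubset_of_mem_notMem (hAW ha) fun h => (hsep a h).1 ha) hC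
    refine ⟨w, hCW hwC, ?_⟩
    have notMem_A {x : V} (hwx : G.Adj w x) : x ∉ A := fun hx => (hsep w hwC).2 x hx hwx
    rintro x ⟨hxW, hwx⟩ y ⟨hyW, hwy⟩ hxy
    by_cases hxC : x ∈ C <;> by_cases hyC : y ∈ C
    · exact hw ⟨hxC, hwx⟩ ⟨hyC, hwy⟩ hxy
    · exact (hadj y hyW (notMem_A hwy) hyC).2 x hxC
    · exact ((hadj x hxW (notMem_A hwx) hxC).2 y hyC).symm
    · exact hG.adj_of_common_neighbor hA (hsep w hwC).1 (hsep w hwC).2 hxy hwx hwy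
        (hadj x hxW (notMem_A hwx) hxC).1 (hadj y hyW (notMem_A hwy) hyC).1
  · push Not at hclique
    obtain ⟨w, hw⟩ := hW
    exact ⟨w, hw, fun a ha b hb hab => hclique b hb.1 a ha.1 hab⟩

end IsChordalGraph

end ChordalGraphs

section EdgeIdeals

variable {k : Type*} [Field k] {n : ℕ} {E E' : Set (Finset (Fin n))} {W : Finset (Fin n)}
  {x : Fin n} {r : ℤ}

theorem mem_edgeIdealH_iff {p : MvPolynomial (Fin n) k} :
    p ∈ edgeIdealH k E ↔ ∀ m ∈ p.support, ∃ F ∈ E, F ⊆ m.support := by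
  have hprod (F : Finset (Fin n)) : (∏ i ∈ F, X i : MvPolynomial (Fin n) k) =
      monomial (Finsupp.indicator F fun _ _ => 1) 1 := by
    simpa using prod_X_pow (R := k) (fun _ => 1) F
  simp only [edgeIdealH, hprod]
  rw [← Set.image_image (fun m => monomial m (1 : k)), mem_ideal_span_monomial_image]
  refine forall₂_congr fun m _ => ?_
  rw [Set.exists_mem_image]
  refine exists_congr fun F => and_congr_right fun _ => forall_congr' fun i => ?_
  rw [Finsupp.indicator_apply, Finsupp.mem_support_iff]
  split_ifs with hi <;> simp [hi, Nat.one_le_iff_ne_zero]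

theorem edgeIdealH_le_of_forall_exists_subset (h : ∀ F ∈ E, ∃ F' ∈ E', F' ⊆ F) :
    edgeIdealH k E ≤ edgeIdealH k E' := by
  refine Ideal.span_le.2 ?_
  rintro _ ⟨F, hF, rfl⟩
  obtain ⟨F', hF', hsub⟩ := h F hF
  exact Ideal.mem_of_dvd _ (Finset.prod_dvd_prod_of_subset _ _ _ hsub)
    (Ideal.subset_span (Set.mem_image_of_mem _ hF'))

theorem edgeIdealH_eq_sup (E : Set (Finset (Fin n))) (x : Fin n) :
    edgeIdealH k E = edgeIdealH k {F ∈ E | x ∉ F} ⊔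
      Ideal.span {X x} * edgeIdealH k ((·.erase x) '' E) := by
  refine le_antisymm (Ideal.span_le.2 ?_) (sup_le (Ideal.span_mono ?_) ?_)
  · rintro _ ⟨F, hF, rfl⟩
    by_cases hxF : x ∈ F
    · refine Ideal.mem_sup_right (Ideal.mem_span_singleton_mul.2 ⟨∏ i ∈ F.erase x, X i, ?_, ?_⟩)
      · exact Ideal.subset_span ⟨_, Set.mem_image_of_mem _ hF, rfl⟩
      · exact Finset.mul_prod_erase F _ hxF
    · exact Ideal.mem_sup_left (Ideal.subset_span ⟨F, ⟨hF, hxF⟩, rfl⟩)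
  · exact Set.image_mono fun F hF => hF.1
  · rw [edgeIdealH, Ideal.span_mul_span', Ideal.span_le]
    rintro _ ⟨_, rfl, _, ⟨_, ⟨F, hF, rfl⟩, rfl⟩, rfl⟩
    refine Ideal.mem_of_dvd _ ?_ (Ideal.subset_span ⟨F, hF, rfl⟩)
    simp only [← Finset.prod_insert (F.notMem_erase x)]
    exact Finset.prod_dvd_prod_of_subset _ _ _ (Finset.insert_erase_subset x F)

theorem mem_edgeIdealH_of_X_mul_mem (hE : ∀ F ∈ E, x ∉ F) {p : MvPolynomial (Fin n) k}
    (hp : X x * p ∈ edgeIdealH k E) : p ∈ edgeIdealH k E := by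
  rw [mem_edgeIdealH_iff] at hp ⊢
  intro m hm
  obtain ⟨F, hF, hsub⟩ := hp (Finsupp.single x 1 + m) (by
    rwa [mem_support_iff, coeff_X_mul, ← mem_support_iff])
  refine ⟨F, hF, fun i hi => ?_⟩
  have hxi : x ≠ i := fun h => hE F hF (h ▸ hi)
  simpa [Finsupp.single_apply, hxi] using hsub hi

theorem exists_mem_colonHyper_subset {F : Finset (Fin n)} (hF : F ∈ E) :
    ∃ G ∈ colonHyper E x, G ⊆ F.erase x := by
  obtain ⟨G, hGF, hG⟩ := (Set.toFinite ((·.erase x) '' E)).exists_le_minimal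
    (Set.mem_image_of_mem _ hF)
  obtain ⟨F', hF', rfl⟩ := hG.prop
  refine ⟨_, ⟨⟨F', hF', rfl⟩, fun F'' hF'' h => h.antisymm ?_⟩, hGF⟩
  exact hG.le_of_le (Set.mem_image_of_mem _ hF'') h

theorem edgeIdealH_image_erase :
    edgeIdealH k ((·.erase x) '' {F ∈ E | F ⊆ insert x W}) =
      edgeIdealH k {G ∈ colonHyper E x | G ⊆ W} := by
  refine le_antisymm (edgeIdealH_le_of_forall_exists_subset ?_)
    (edgeIdealH_le_of_forall_exists_subset ?_)
  · rintro _ ⟨F, ⟨hF, hFW⟩, rfl⟩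
    obtain ⟨G, hG, hGF⟩ := exists_mem_colonHyper_subset (x := x) hF
    exact ⟨G, ⟨hG, hGF.trans (Finset.subset_insert_iff.1 hFW)⟩, hGF⟩
  · rintro _ ⟨⟨⟨F, hF, rfl⟩, -⟩, hFW⟩
    exact ⟨_, ⟨F, ⟨hF, Finset.subset_insert_iff.2 hFW⟩, rfl⟩, subset_rfl⟩

/-- `reg I(H) ≤ r` for the hypergraph `H` with edge set `E`. -/
abbrev EdgeRegLE (k : Type*) [Field k] (E : Set (Finset (Fin n))) (r : ℤ) : Prop :=
  RegLE (zGrading k n) (edgeIdealH k E) r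

namespace EdgeRegLE

theorem empty : EdgeRegLE k (∅ : Set (Finset (Fin n))) r := by
  rw [EdgeRegLE, edgeIdealH, Set.image_empty, Ideal.span_empty]
  exact .bot

theorem of_empty_mem (hE : ∅ ∈ E) (hr : 0 ≤ r) : EdgeRegLE k E r := by
  have htop : edgeIdealH k E = ⊤ :=
    (Ideal.eq_top_iff_one _).2 (Ideal.subset_span ⟨∅, hE, Finset.prod_empty⟩)
  rw [EdgeRegLE, htop]
  exact .top hr

theorem of_deletion_of_erase (hdel : EdgeRegLE k {F ∈ E | x ∉ F} r)
    (herase : EdgeRegLE k ((·.erase x) '' E) (r - 1)) : EdgeRegLE k E r := by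
  rw [EdgeRegLE, edgeIdealH_eq_sup E x]
  refine hdel.sup_span_singleton_mul ?_ (mem_nonZeroDivisors_of_ne_zero (X_ne_zero x))
    (edgeIdealH_le_of_forall_exists_subset ?_)
    (fun _ => mem_edgeIdealH_of_X_mul_mem fun _ hF => hF.2) herase
  · exact isWeightedHomogeneous_X k _ x
  · exact fun F hF => ⟨_, Set.mem_image_of_mem _ hF.1, F.erase_subset x⟩

theorem image_singleton (N : Set (Fin n)) : EdgeRegLE k (singleton '' N) 1 := by
  induction N, N.toFinite using Set.Finite.induction_on with
  | empty => simpa using empty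
  | @insert x N hx _ ih =>
    have hdel : {F ∈ singleton '' insert x N | x ∉ F} =
        (singleton '' N : Set (Finset (Fin n))) := by
      ext F
      constructor
      · rintro ⟨⟨y, rfl | hy, rfl⟩, hxy⟩
        exacts [absurd (Finset.mem_singleton_self _) hxy, ⟨y, hy, rfl⟩]
      · rintro ⟨y, hy, rfl⟩
        exact ⟨⟨y, .inr hy, rfl⟩, fun h => hx (Finset.mem_singleton.1 h ▸ hy)⟩
    refine of_deletion_of_erase (x := x) (hdel ▸ ih) (of_empty_mem ?_ (by simp))
    exact ⟨{x}, ⟨x, .inl rfl, rfl⟩, Finset.erase_singleton x⟩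

end EdgeRegLE

/-- The edges of the induced subgraph of `G` on `W`, as two-element sets. -/
def graphEdges {V : Type*} [DecidableEq V] (G : SimpleGraph V) (W : Finset V) : Set (Finset V) :=
  {F | ∃ a ∈ W, ∃ b ∈ W, G.Adj a b ∧ F = {a, b}}

theorem sep_subset_eq_graphEdges {V : Type*} [DecidableEq V] {S : Set (Finset V)}
    (hS : ∀ F ∈ S, F.card = 2) (W : Finset V) :
    {F ∈ S | F ⊆ W} = graphEdges (.fromRel fun a b => {a, b} ∈ S) W := by
  ext F
  constructor
  · rintro ⟨hF, hFW⟩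
    obtain ⟨a, b, hab, rfl⟩ := Finset.card_eq_two.1 (hS F hF)
    rw [Finset.insert_subset_iff, Finset.singleton_subset_iff] at hFW
    exact ⟨a, hFW.1, b, hFW.2, ⟨hab, .inl hF⟩, rfl⟩
  · rintro ⟨a, ha, b, hb, ⟨-, hab⟩, rfl⟩
    refine ⟨hab.elim id fun h => Finset.pair_comm a b ▸ h, ?_⟩
    exact Finset.insert_subset ha (Finset.singleton_subset_iff.2 hb)

theorem graphEdges_erase {V : Type*} [DecidableEq V] {G : SimpleGraph V} {W : Finset V} {w : V} :
    {F ∈ graphEdges G W | w ∉ F} = graphEdges G (W.erase w) := by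
  ext F
  constructor
  · rintro ⟨⟨a, ha, b, hb, hab, rfl⟩, hw⟩
    exact ⟨a, by grind, b, by grind, hab, rfl⟩
  · rintro ⟨a, ha, b, hb, hab, rfl⟩
    exact ⟨⟨a, by grind, b, by grind, hab, rfl⟩, by grind⟩

/-- The non-neighbours of `w` are independent, so every edge contains a neighbour of `w`. -/
theorem edgeIdealH_image_erase_graphEdges {G : SimpleGraph (Fin n)} {w : Fin n} (hw : w ∈ W)
    (hclique : Gᶜ.IsClique {a | a ∈ W ∧ Gᶜ.Adj w a}) :
    edgeIdealH k ((·.erase w) '' graphEdges G W) =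
      edgeIdealH k (singleton '' {y | y ∈ W ∧ G.Adj w y}) := by
  refine le_antisymm (edgeIdealH_le_of_forall_exists_subset ?_)
    (edgeIdealH_le_of_forall_exists_subset ?_)
  · rintro _ ⟨_, ⟨a, ha, b, hb, hab, rfl⟩, rfl⟩
    have hnbr : G.Adj w a ∨ G.Adj w b := by
      by_contra! h
      have hwa : w ≠ a := fun hwa => h.2 (hwa ▸ hab)
      have hwb : w ≠ b := fun hwb => h.1 (hwb ▸ hab.symm)
      exact (hclique ⟨ha, hwa, h.1⟩ ⟨hb, hwb, h.2⟩ hab.ne).2 hab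
    rcases hnbr with h | h
    · exact ⟨_, ⟨a, ⟨ha, h⟩, rfl⟩, by simp [h.ne']⟩
    · exact ⟨_, ⟨b, ⟨hb, h⟩, rfl⟩, by simp [h.ne']⟩
  · rintro _ ⟨y, ⟨hy, hwy⟩, rfl⟩
    exact ⟨_, ⟨_, ⟨w, hw, y, hy, hwy, rfl⟩, rfl⟩, by grind⟩

namespace EdgeRegLE

/-- One direction of Fröberg's theorem: split off a simplicial vertex of `Gᶜ`. -/
theorem of_isChordalGraph_compl {G : SimpleGraph (Fin n)} (hG : IsChordalGraph Gᶜ)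
    (W : Finset (Fin n)) :
    EdgeRegLE k (graphEdges G W) 2 := by
  induction W using Finset.strongInduction with | H W ih
  obtain rfl | hW := W.eq_empty_or_nonempty
  · convert empty
    simp [graphEdges]
  obtain ⟨w, hw, hclique⟩ := hG.exists_isClique_neighbors hW
  refine of_deletion_of_erase (x := w) ?_ ?_
  · rw [graphEdges_erase]
    exact ih _ (Finset.erase_ssubset hw)
  · rw [EdgeRegLE, edgeIdealH_image_erase_graphEdges hw hclique]
    exact image_singleton _

theorem of_colonHyper (hr : 0 ≤ r)
    (h : ∀ x, (∃ F ∈ E, x ∈ F) → ∀ W, EdgeRegLE k {G ∈ colonHyper E x | G ⊆ W} (r - 1)) :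
    EdgeRegLE k E r := by
  suffices hsub : ∀ W, EdgeRegLE k {F ∈ E | F ⊆ W} r by simpa using hsub Finset.univ
  intro W
  induction W using Finset.induction_on with
  | empty =>
    by_cases hE : ∅ ∈ E
    · exact of_empty_mem ⟨hE, subset_rfl⟩ hr
    · rw [Set.sep_eq_empty_iff_mem_false.2 fun F hF h => hE (Finset.subset_empty.1 h ▸ hF)]
      exact empty
  | insert x W hxW ih =>
    have hdel : {F ∈ {F ∈ E | F ⊆ insert x W} | x ∉ F} = {F ∈ E | F ⊆ W} := by
      ext F
      constructor
      · exact fun ⟨⟨hF, hFW⟩, hxF⟩ => ⟨hF, (Finset.subset_insert_iff_of_notMem hxF).1 hFW⟩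
      · exact fun ⟨hF, hFW⟩ => ⟨⟨hF, hFW.trans (W.subset_insert x)⟩, fun h => hxW (hFW h)⟩
    by_cases hx : ∃ F ∈ E, x ∈ F
    · refine of_deletion_of_erase (x := x) (hdel ▸ ih) ?_
      rw [EdgeRegLE, edgeIdealH_image_erase]
      exact h x hx W
    · rw [← hdel] at ih
      convert ih using 1
      exact (Set.sep_eq_self_iff_mem_true.2 fun F hF hxF => hx ⟨F, hF.1, hxF⟩).symm

end EdgeRegLE

theorem reg_le_three_of_colon_chordal_general (E : Set (Finset (Fin n)))
    (hx : ∀ x : Fin n, (∃ F ∈ E, x ∈ F) →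
      (∀ G ∈ colonHyper E x, G.card = 2) ∧
        IsChordalGraph
          ((SimpleGraph.fromRel
            (fun a b : Fin n => ({a, b} : Finset (Fin n)) ∈ colonHyper E x))ᶜ)) :
    regIdeal (edgeIdealH k E) ≤ 3 := by
  refine RegLE.regIdeal_le (by simp) (EdgeRegLE.of_colonHyper (by simp) fun x hxE W => ?_)
  obtain ⟨hcard, hchordal⟩ := hx x hxE
  rw [sep_subset_eq_graphEdges hcard]
  exact .of_isChordalGraph_compl hchordal W

end EdgeIdeals

/-- **Theorem.** Let `H` be a simple hypergraph such that for every vertex `x` the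
hypergraph `H : x` is a graph (all of its edges have two vertices) whose complement is
chordal. Then `reg I(H) ≤ 3`. -/
theorem reg_le_three_of_colon_chordal {k : Type*} [Field k] {n : ℕ}
    (E : Set (Finset (Fin n)))
    (hsimple : ∀ F₁ ∈ E, ∀ F₂ ∈ E, F₁ ⊆ F₂ → F₁ = F₂)
    (hx : ∀ x : Fin n,
      (∀ G ∈ colonHyper E x, G.card = 2) ∧
        IsChordalGraph
          ((SimpleGraph.fromRel
            (fun a b : Fin n => ({a, b} : Finset (Fin n)) ∈ colonHyper E x))ᶜ)) :
    regIdeal (edgeIdealH k E) ≤ 3 :=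
  reg_le_three_of_colon_chordal_general E fun x _ => hx x
end
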